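/- arXiv:1405.1575 — 2 statements merged into one kernel-verified Lean document; each statement's English description precedes it below -/
import Mathlib

section
/- Let V be a primitive linear subspace of the n×p matrices over F2 of dimension 4 such that every nonzero matrix of V has rank 2. Then V is equivalent to V3(F2). -/
/-!
View the space `V` as a trilinear form `T : V × X × Y → 𝔽₂`, where `X` and `Y` are the spaces of
row and column vectors. Each nonzero `M` in `V` is a rank two map `X → Dual Y`, and primitivity
says that no nonzero vector lies in the range of all of them; the same holds with `X` and `Y`
exchanged.

The crucial fact, valid over every field, is that for every nonzero `x` the operators killing `x`
form a space of dimension at most two. Otherwise they contain a hyperplane `H` and all the values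
`M x` lie on a line `L`. Modulo `L`, the operators outside `H` have rank at most one, while some
`M` in `H` keeps rank two. For `A` outside `H` the ranks in `M = A + (M - A)` add up, so that `A`
factors through the range of `M`, and `V` is identified with the endomorphisms of this plane. The
invertible ones have rank two and hence lie in `H`, although they span all endomorphisms.

Counting the pairs `(M, x)` with `M x = 0` in two ways then gives `dim X ≤ 4`, with equality in the
above bound for every nonzero `x` if `dim X = 4`, and for the members of a basis of `X` if
`dim X = 3`; also `dim X ≥ 3`, since otherwise all ranges agree. If `dim Y = 4`, there are three
independent vectors in `X` whose annihilators in `Y` are pairwise disjoint planes. As three values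
of an operator of rank two are dependent, one of these vectors or their sum is killed, and the
sixteen elements of `V` are covered by four planes meeting in zero, which is impossible.

If `dim X = dim Y = 3`, vectors `y i` annihilated by the basis vectors `b i` of `X` turn `V` into a
space of hollow matrices. The determinant of a hollow `3 × 3` matrix is
`m₀₁ m₁₂ m₂₀ + m₁₀ m₂₁ m₀₂`. As it vanishes on the four-dimensional space `V`, neither triple of
entries can be `(1, 1, 1)`, and a space of triples in which every coordinate occurs and which
avoids `(1, 1, 1)` satisfies `a + b + c = 0`. So `V` lies in `V3`, and the dimensions agree.
-/

open Matrix

/-- Two linear subspaces of `n × p` matrices over `K` are *equivalent* when one is obtained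
from the other by multiplying on the left and on the right by fixed invertible matrices. -/
def MatEquiv (K : Type*) [Field K] {n p : ℕ}
    (V₁ V₂ : Submodule K (Matrix (Fin n) (Fin p) K)) : Prop :=
  ∃ (P : Matrix (Fin n) (Fin n) K) (Q : Matrix (Fin p) (Fin p) K),
    IsUnit P ∧ IsUnit Q ∧
      (V₂ : Set (Matrix (Fin n) (Fin p) K)) =
        (fun M => P * M * Q) '' (V₁ : Set (Matrix (Fin n) (Fin p) K))

/-- A linear subspace of matrices is *reduced* when no nonzero vector is annihilated by every
matrix of the space, and the column spaces of the matrices of the space together span the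
whole target space. -/
def Reduced (K : Type*) [Field K] {n p : ℕ}
    (V : Submodule K (Matrix (Fin n) (Fin p) K)) : Prop :=
  (∀ x : Fin p → K, (∀ M ∈ V, M.mulVec x = 0) → x = 0) ∧
  Submodule.span K {y : Fin n → K | ∃ M ∈ V, ∃ x : Fin p → K, M.mulVec x = y} = ⊤

/-- The *upper rank* of a linear subspace of matrices: the maximal rank of a matrix in it. -/
noncomputable def urk {K : Type*} [Field K] {n p : ℕ}
    (V : Submodule K (Matrix (Fin n) (Fin p) K)) : ℕ :=
  sSup (Matrix.rank '' (V : Set (Matrix (Fin n) (Fin p) K)))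

/-- The matrix obtained by deleting the last column. -/
def dropCol {K : Type*} [Field K] {n p : ℕ} (M : Matrix (Fin n) (Fin p) K) :
    Matrix (Fin n) (Fin (p - 1)) K :=
  M.submatrix id (Fin.castLE (Nat.sub_le p 1))

/-- The matrix obtained by deleting the last row. -/
def dropRow {K : Type*} [Field K] {n p : ℕ} (M : Matrix (Fin n) (Fin p) K) :
    Matrix (Fin (n - 1)) (Fin p) K :=
  M.submatrix (Fin.castLE (Nat.sub_le n 1)) id

/-- A linear subspace of matrices (of upper rank `r = urk V`) is *semi-primitive* when it is
reduced and it is not equivalent to a subspace `T` such that the space obtained by deleting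
the last column of each matrix of `T` has upper rank at most `r - 1`. -/
def SemiPrimitive (K : Type*) [Field K] {n p : ℕ}
    (V : Submodule K (Matrix (Fin n) (Fin p) K)) : Prop :=
  Reduced K V ∧
    ¬ ∃ T : Submodule K (Matrix (Fin n) (Fin p) K),
        MatEquiv K V T ∧ ∀ M ∈ T, (dropCol M).rank ≤ urk V - 1

/-- A linear subspace of matrices (of upper rank `r = urk V`) is *primitive* when it is
semi-primitive and it is not equivalent to a subspace `T` such that the space obtained by
deleting the last row of each matrix of `T` has upper rank at most `r - 1`. -/
def Primitive (K : Type*) [Field K] {n p : ℕ}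
    (V : Submodule K (Matrix (Fin n) (Fin p) K)) : Prop :=
  SemiPrimitive K V ∧
    ¬ ∃ T : Submodule K (Matrix (Fin n) (Fin p) K),
        MatEquiv K V T ∧ ∀ M ∈ T, (dropRow M).rank ≤ urk V - 1

/-- `V3(F2)`: the `3 × 3` matrices over `F2` with zero diagonal satisfying
`M 0 1 + M 1 2 + M 2 0 = 0` and `M 2 1 + M 1 0 + M 0 2 = 0`. -/
def V3 : Submodule (ZMod 2) (Matrix (Fin 3) (Fin 3) (ZMod 2)) where
  carrier := {M | (∀ i : Fin 3, M i i = 0) ∧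
    M 0 1 + M 1 2 + M 2 0 = 0 ∧ M 2 1 + M 1 0 + M 0 2 = 0}
  add_mem' := by
    rintro M N ⟨hM1, hM2, hM3⟩ ⟨hN1, hN2, hN3⟩
    refine ⟨fun i => by simp [Matrix.add_apply, hM1 i, hN1 i], ?_, ?_⟩
    · simp only [Matrix.add_apply]
      linear_combination hM2 + hN2
    · simp only [Matrix.add_apply]
      linear_combination hM3 + hN3
  zero_mem' := by
    refine ⟨fun i => rfl, ?_, ?_⟩ <;> simp
  smul_mem' := by
    rintro c M ⟨hM1, hM2, hM3⟩
    refine ⟨fun i => by simp [Matrix.smul_apply, hM1 i], ?_, ?_⟩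
    · simp only [Matrix.smul_apply, smul_eq_mul]
      linear_combination c * hM2
    · simp only [Matrix.smul_apply, smul_eq_mul]
      linear_combination c * hM3

/-- Transport of a subspace of `n × p` matrices to a subspace of `3 × 3` matrices along
equalities `n = 3` and `p = 3`. -/
def reindexSub {n p : ℕ} (hn : n = 3) (hp : p = 3)
    (V : Submodule (ZMod 2) (Matrix (Fin n) (Fin p) (ZMod 2))) :
    Submodule (ZMod 2) (Matrix (Fin 3) (Fin 3) (ZMod 2)) :=
  V.map (Matrix.reindexLinearEquiv (ZMod 2) (ZMod 2) (finCongr hn) (finCongr hp)).toLinearMap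

open Module

section SpanUnits

variable {n R : Type*} [Fintype n] [DecidableEq n] [CommRing R]

theorem single_one_mem_span_isUnit_of_ne {i j : n} (h : i ≠ j) :
    single i j (1 : R) ∈ Submodule.span R {A : Matrix n n R | IsUnit A} := by
  have hunit : IsUnit (transvection i j (1 : R)) := by
    rw [isUnit_iff_isUnit_det, det_transvection_of_ne i j h]
    exact isUnit_one
  rw [← add_sub_cancel_left 1 (single i j (1 : R))]
  exact sub_mem (Submodule.subset_span hunit) (Submodule.subset_span isUnit_one)

theorem single_self_one_mem_span_isUnit [Nontrivial n] (i : n) :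
    single i i (1 : R) ∈ Submodule.span R {A : Matrix n n R | IsUnit A} := by
  obtain ⟨j, hji⟩ := exists_ne i
  have hunit : IsUnit (transvection i j (1 : R) * transvection j i 1) := by
    rw [isUnit_iff_isUnit_det, det_mul, det_transvection_of_ne i j hji.symm,
      det_transvection_of_ne j i hji, one_mul]
    exact isUnit_one
  have hexpand : single i i (1 : R) =
      transvection i j 1 * transvection j i 1 - 1 - single i j 1 - single j i 1 := by
    simp only [transvection, add_mul, mul_add, one_mul, mul_one, single_mul_single_same]
    abel
  rw [hexpand]
  exact sub_mem (sub_mem (sub_mem (Submodule.subset_span hunit)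
    (Submodule.subset_span isUnit_one)) (single_one_mem_span_isUnit_of_ne hji.symm))
    (single_one_mem_span_isUnit_of_ne hji)

theorem span_isUnit_matrix_eq_top [Nontrivial n] :
    Submodule.span R {A : Matrix n n R | IsUnit A} = ⊤ := by
  refine eq_top_iff.2 fun A _ => ?_
  rw [matrix_eq_sum_single A]
  refine sum_mem fun i _ => sum_mem fun j _ => ?_
  rw [← mul_one (A i j), ← smul_eq_mul, ← smul_single]
  refine Submodule.smul_mem _ _ ?_
  obtain rfl | h := eq_or_ne i j
  · exact single_self_one_mem_span_isUnit i
  · exact single_one_mem_span_isUnit_of_ne h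

theorem span_isUnit_end_eq_top {K U : Type*} [Field K] [AddCommGroup U] [Module K U]
    (hU : 1 < finrank K U) : Submodule.span K {f : End K U | IsUnit f} = ⊤ := by
  have : Module.Finite K U := finite_of_finrank_pos (by lia)
  have : Nontrivial (Fin (finrank K U)) := Fin.nontrivial_iff_two_le.2 hU
  let e : Matrix (Fin (finrank K U)) (Fin (finrank K U)) K ≃ₐ[K] End K U :=
    (LinearMap.toMatrixAlgEquiv (finBasis K U)).symm
  have himage : e.toLinearMap '' {A | IsUnit A} = {f : End K U | IsUnit f} := by
    ext f
    constructor
    · rintro ⟨A, hA, rfl⟩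
      exact hA.map e
    · exact fun hf => ⟨e.symm f, IsUnit.map e.symm hf, e.apply_symm_apply f⟩
  rw [← himage, Submodule.span_image, span_isUnit_matrix_eq_top, Submodule.map_top,
    LinearMap.range_eq_top]
  exact e.surjective

end SpanUnits

section RankAdditivity

variable {K X Z : Type*} [Field K] [AddCommGroup X] [Module K X] [Module.Finite K X]
  [AddCommGroup Z] [Module K Z] {f g : X →ₗ[K] Z}

theorem range_le_range_add_of_finrank_add_le
    (h : finrank K f.range + finrank K g.range ≤ finrank K (f + g).range) :
    f.range ≤ (f + g).range := by
  have hle : (f + g).range ≤ f.range ⊔ g.range := LinearMap.range_add_le f g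
  have heq : (f + g).range = f.range ⊔ g.range :=
    Submodule.eq_of_le_of_finrank_le hle
      ((Submodule.finrank_add_le_finrank_add_finrank _ _).trans h)
  exact heq ▸ le_sup_left

theorem ker_add_le_ker_of_finrank_add_le
    (h : finrank K f.range + finrank K g.range ≤ finrank K (f + g).range) :
    (f + g).ker ≤ f.ker := by
  have hdisj : f.range ⊓ g.range = ⊥ := by
    have hsup := Submodule.finrank_sup_add_finrank_inf_eq f.range g.range
    have hle := Submodule.finrank_mono (LinearMap.range_add_le f g)
    exact Submodule.finrank_eq_zero.1 (by lia)
  intro x hx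
  have hfg : f x = g (-x) := by
    rw [map_neg]
    exact eq_neg_of_add_eq_zero_left hx
  have hmem : f x ∈ f.range ⊓ g.range := ⟨⟨x, rfl⟩, hfg ▸ ⟨-x, rfl⟩⟩
  exact (Submodule.mem_bot K).1 (hdisj ▸ hmem)

theorem finrank_range_mkQ_comp_add (f : X →ₗ[K] Z) (L : Submodule K Z) :
    finrank K (L.mkQ ∘ₗ f).range + finrank K ↥(f.range ⊓ L) = finrank K f.range := by
  rw [LinearMap.range_comp, ← LinearMap.range_domRestrict, ← Submodule.map_comap_subtype,
    Submodule.finrank_map_subtype_eq, ← (L.mkQ.domRestrict f.range).finrank_range_add_finrank_ker,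
    LinearMap.ker_domRestrict, Submodule.ker_mkQ]

theorem finrank_range_mkQ_span_singleton_comp_add_one {z : Z} (hz : z ≠ 0) (h : z ∈ f.range) :
    finrank K ((K ∙ z).mkQ ∘ₗ f).range + 1 = finrank K f.range := by
  have hle : K ∙ z ≤ f.range := (Submodule.span_singleton_le_iff_mem z _).2 h
  rw [← finrank_range_mkQ_comp_add f (K ∙ z), inf_eq_right.2 hle, finrank_span_singleton hz]

theorem finrank_range_mkQ_span_singleton_comp_of_notMem {z : Z} (h : z ∉ f.range) :
    finrank K ((K ∙ z).mkQ ∘ₗ f).range = finrank K f.range := by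
  have hdisj : Disjoint f.range (K ∙ z) :=
    Submodule.disjoint_span_singleton.2 fun hz => absurd hz h
  rw [← finrank_range_mkQ_comp_add f (K ∙ z), hdisj.eq_bot, finrank_bot, add_zero]

end RankAdditivity

section Compression

theorem span_compl_eq_top {K V : Type*} [Ring K] [AddCommGroup V] [Module K V]
    {H : Submodule K V} (hH : H ≠ ⊤) : Submodule.span K (H : Set V)ᶜ = ⊤ := by
  obtain ⟨A, -, hA⟩ := SetLike.exists_of_lt hH.lt_top
  refine eq_top_iff.2 fun C _ => ?_
  by_cases hC : C ∈ H
  · rw [← add_sub_cancel_right C A]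
    have hCA : C + A ∉ H := fun h => hA ((H.add_mem_iff_right hC).1 h)
    exact sub_mem (Submodule.subset_span hCA) (Submodule.subset_span hA)
  · exact Submodule.subset_span hC

variable {K V X Z : Type*} [Field K] [AddCommGroup V] [Module K V]
  [AddCommGroup X] [Module K X] [Module.Finite K X] [AddCommGroup Z] [Module K Z]
  {N : V →ₗ[K] X →ₗ[K] Z}

theorem exists_linearEquiv_end_range (hN : Function.Injective N) {f : X →ₗ[K] Z}
    (hrange : ∀ C, (N C).range ≤ f.range) (hker : ∀ C, f.ker ≤ (N C).ker)
    (hdim : finrank K V = finrank K f.range ^ 2) :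
    ∃ Φ : V ≃ₗ[K] End K f.range, ∀ C, finrank K (Φ C).range ≤ finrank K (N C).range := by
  obtain ⟨s, hs⟩ := f.rangeRestrict.exists_rightInverse_of_surjective f.range_rangeRestrict
  obtain ⟨π, hπ⟩ := f.range.subtype.exists_leftInverse_of_injective f.range.ker_subtype
  let Ψ : V →ₗ[K] End K f.range := LinearMap.llcomp K _ _ _ π ∘ₗ LinearMap.lcomp K Z s ∘ₗ N
  have hΨ (C : V) (u : f.range) : Ψ C u = π (N C (s u)) := rfl
  have hNs (C : V) (x : X) : N C (s (f.rangeRestrict x)) = N C x := by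
    refine LinearMap.sub_mem_ker_iff.1 (hker C (LinearMap.sub_mem_ker_iff.2 ?_))
    exact congrArg Subtype.val (LinearMap.congr_fun hs (f.rangeRestrict x))
  have hπN (C : V) (x : X) : (π (N C x) : Z) = N C x :=
    congrArg Subtype.val (LinearMap.congr_fun hπ ⟨N C x, hrange C ⟨x, rfl⟩⟩)
  have hΨ_injective : Function.Injective Ψ := by
    refine (injective_iff_map_eq_zero Ψ).2 fun C hC => hN ?_
    ext x
    rw [← hπN, ← hNs, ← hΨ, hC]
    simp only [LinearMap.zero_apply, ZeroMemClass.coe_zero, map_zero]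
  have : Module.Finite K V := Module.Finite.of_injective Ψ hΨ_injective
  have hfinrank : finrank K V = finrank K (End K f.range) := by
    rw [hdim, finrank_linearMap, sq]
  refine ⟨Ψ.linearEquivOfInjective hΨ_injective hfinrank, fun C => ?_⟩
  have hle : (Ψ C).range ≤ (N C).range.map π := by
    rintro _ ⟨u, rfl⟩
    exact ⟨N C (s u), LinearMap.mem_range_self _ _, rfl⟩
  exact (Submodule.finrank_mono hle).trans (Submodule.finrank_map_le π _)

theorem finrank_range_ne_two_of_forall_notMem_finrank_range_le_one
    (hN : Function.Injective N) (hdim : finrank K V = 4) {H : Submodule K V} (hH : H ≠ ⊤)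
    (hone : ∀ C ∉ H, finrank K (N C).range ≤ 1) {M : V} (hM : M ∈ H) :
    finrank K (N M).range ≠ 2 := by
  intro htwo
  have hsum (A : V) : N A + N (M - A) = N M := by rw [← map_add, add_sub_cancel]
  have hadd {A : V} (hA : A ∉ H) : finrank K (N A).range + finrank K (N (M - A)).range ≤
      finrank K (N A + N (M - A)).range := by
    have hMA : M - A ∉ H := fun h => hA ((H.sub_mem_iff_right hM).1 h)
    rw [hsum, htwo]
    exact Nat.add_le_add (hone A hA) (hone _ hMA)
  have hcompl := span_compl_eq_top hH
  have hrange (C : V) : (N C).range ≤ (N M).range := by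
    rintro _ ⟨x, rfl⟩
    have hle : Submodule.span K (H : Set V)ᶜ ≤ (N M).range.comap (N.flip x) :=
      Submodule.span_le.2 fun A hA =>
        hsum A ▸ range_le_range_add_of_finrank_add_le (hadd hA) ⟨x, rfl⟩
    exact hle (hcompl ▸ Submodule.mem_top)
  have hker (C : V) : (N M).ker ≤ (N C).ker := by
    intro x hx
    have hle : Submodule.span K (H : Set V)ᶜ ≤ (N.flip x).ker :=
      Submodule.span_le.2 fun A hA =>
        ker_add_le_ker_of_finrank_add_le (hadd hA) ((hsum A).symm ▸ hx)
    exact hle (hcompl ▸ Submodule.mem_top)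
  obtain ⟨Φ, hΦ⟩ := exists_linearEquiv_end_range hN hrange hker (by rw [hdim, htwo]; norm_num)
  have hunit : {g : End K (N M).range | IsUnit g} ⊆ H.map Φ.toLinearMap := by
    intro g hg
    refine ⟨Φ.symm g, by_contra fun hgH => ?_, Φ.apply_symm_apply g⟩
    have hle := (hΦ (Φ.symm g)).trans (hone _ hgH)
    rw [Φ.apply_symm_apply, LinearMap.range_eq_top.2 ((Module.End.isUnit_iff g).1 hg).2,
      finrank_top, htwo] at hle
    lia
  have htop : H.map Φ.toLinearMap = ⊤ :=
    top_le_iff.1 ((span_isUnit_end_eq_top (by lia)).symm.trans_le (Submodule.span_le.2 hunit))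
  exact hH ((Submodule.map_eq_top_iff (e := Φ)).1 htop)

end Compression

section PrimitiveFamily

/-- The properties, as seen from the target, of the inclusion `T` of a primitive four-dimensional
space of operators `X → Z` all of whose nonzero members have rank two. The last field is the form
in which one half of primitivity is used: no nonzero vector of `Z` lies in the range of every
nonzero operator. -/
structure IsPrimitiveFamily {K V X Z : Type*} [Field K] [AddCommGroup V] [Module K V]
    [AddCommGroup X] [Module K X] [AddCommGroup Z] [Module K Z] (T : V →ₗ[K] X →ₗ[K] Z) :
    Prop where
  finrank_eq_four : finrank K V = 4
  finrank_range : ∀ M ≠ 0, finrank K (T M).range = 2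
  exists_apply_ne_zero : ∀ x ≠ 0, ∃ M, T M x ≠ 0
  exists_notMem_range : ∀ z ≠ 0, ∃ M ≠ 0, z ∉ (T M).range

theorem apply_mem_range_of_finrank_range_flip_le_one {K V X Z : Type*} [Field K]
    [AddCommGroup V] [Module K V] [Module.Finite K V] [AddCommGroup X] [Module K X]
    [AddCommGroup Z] [Module K Z] {T : V →ₗ[K] X →ₗ[K] Z} {x : X}
    (hx : finrank K (T.flip x).range ≤ 1) {C : V} (hC : T C x ≠ 0) (A : V) :
    T A x ∈ (T C).range := by
  have hspan : K ∙ T C x = (T.flip x).range :=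
    Submodule.eq_of_le_of_finrank_le ((Submodule.span_singleton_le_iff_mem _ _).2 ⟨C, rfl⟩)
      (by rwa [finrank_span_singleton hC])
  obtain ⟨c, hc⟩ := Submodule.mem_span_singleton.1 (hspan.ge ⟨A, rfl⟩)
  exact ⟨c • x, (map_smul _ c x).trans hc⟩

namespace IsPrimitiveFamily

variable {K V X Z : Type*} [Field K] [AddCommGroup V] [Module K V]
  [AddCommGroup X] [Module K X] [AddCommGroup Z] [Module K Z] {T : V →ₗ[K] X →ₗ[K] Z}

theorem finite (hT : IsPrimitiveFamily T) : Module.Finite K V :=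
  finite_of_finrank_pos (by rw [hT.finrank_eq_four]; norm_num)

theorem nontrivial (hT : IsPrimitiveFamily T) : Nontrivial V :=
  nontrivial_of_finrank_pos (R := K) (by rw [hT.finrank_eq_four]; norm_num)

theorem compr₂ {Z' : Type*} [AddCommGroup Z'] [Module K Z'] (hT : IsPrimitiveFamily T)
    (e : Z ≃ₗ[K] Z') : IsPrimitiveFamily (T.compr₂ e.toLinearMap) where
  finrank_eq_four := hT.finrank_eq_four
  finrank_range M hM := by
    rw [← hT.finrank_range M hM, ← e.finrank_map_eq (T M).range, ← LinearMap.range_comp]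
    rfl
  exists_apply_ne_zero x hx := by
    obtain ⟨M, hM⟩ := hT.exists_apply_ne_zero x hx
    exact ⟨M, e.map_ne_zero_iff.2 hM⟩
  exists_notMem_range z hz := by
    obtain ⟨M, hM, hMz⟩ := hT.exists_notMem_range (e.symm z) (e.symm.map_ne_zero_iff.2 hz)
    refine ⟨M, hM, ?_⟩
    rintro ⟨x, rfl⟩
    exact hMz ⟨x, (e.symm_apply_apply _).symm⟩

theorem two_lt_finrank [Module.Finite K Z] (hT : IsPrimitiveFamily T) : 2 < finrank K Z := by
  by_contra! hle
  have hrange {M : V} (hM : M ≠ 0) : (T M).range = ⊤ :=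
    Submodule.eq_top_of_finrank_eq ((Submodule.finrank_le _).antisymm
      (hle.trans (hT.finrank_range M hM).ge))
  have := hT.nontrivial
  obtain ⟨M, hM⟩ := exists_ne (0 : V)
  have : Nontrivial Z := nontrivial_of_finrank_pos (R := K) (by
    rw [← finrank_top, ← hrange hM, hT.finrank_range M hM]; norm_num)
  obtain ⟨z, hz⟩ := exists_ne (0 : Z)
  obtain ⟨A, hA, hAz⟩ := hT.exists_notMem_range z hz
  exact hAz (hrange hA ▸ Submodule.mem_top)

variable [Module.Finite K X]

theorem two_le_finrank (hT : IsPrimitiveFamily T) : 2 ≤ finrank K X := by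
  have := hT.nontrivial
  obtain ⟨M, hM⟩ := exists_ne (0 : V)
  rw [← hT.finrank_range M hM]
  exact (T M).finrank_range_le

theorem two_le_finrank_range_flip (hT : IsPrimitiveFamily T) {x : X} (hx : x ≠ 0) :
    2 ≤ finrank K (T.flip x).range := by
  have := hT.finite
  by_contra! hlt
  obtain ⟨A, hA⟩ := hT.exists_apply_ne_zero x hx
  set φ := T A x
  have hmem {C : V} (hC : C ∉ (T.flip x).ker) : φ ∈ (T C).range :=
    apply_mem_range_of_finrank_range_flip_le_one (Nat.le_of_lt_succ hlt) hC A
  let N : V →ₗ[K] X →ₗ[K] Z ⧸ K ∙ φ := T.compr₂ (K ∙ φ).mkQ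
  have hrankN_of_mem {M : V} (hM : M ≠ 0) (hφ : φ ∈ (T M).range) :
      finrank K (N M).range + 1 = 2 :=
    (finrank_range_mkQ_span_singleton_comp_add_one hA hφ).trans (hT.finrank_range M hM)
  have hrankN_of_notMem {M : V} (hM : M ≠ 0) (hφ : φ ∉ (T M).range) :
      finrank K (N M).range = 2 :=
    (finrank_range_mkQ_span_singleton_comp_of_notMem hφ).trans (hT.finrank_range M hM)
  have hN : Function.Injective N := by
    refine (injective_iff_map_eq_zero N).2 fun M hM => by_contra fun hM0 => ?_
    have hrank : finrank K (N M).range = 0 := by rw [hM, LinearMap.range_zero, finrank_bot]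
    by_cases hφ : φ ∈ (T M).range
    · have := hrankN_of_mem hM0 hφ
      lia
    · have := hrankN_of_notMem hM0 hφ
      lia
  obtain ⟨M, hM, hMφ⟩ := hT.exists_notMem_range φ hA
  refine finrank_range_ne_two_of_forall_notMem_finrank_range_le_one hN hT.finrank_eq_four
    (H := (T.flip x).ker) (fun htop => hA (htop.ge (Submodule.mem_top (x := A)))) (fun C hC => ?_)
    (not_imp_comm.1 hmem hMφ) (hrankN_of_notMem hM hMφ)
  have := hrankN_of_mem (fun h : C = 0 => hC (h ▸ zero_mem _)) (hmem hC)
  lia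

theorem finrank_ker_flip_le_two (hT : IsPrimitiveFamily T) {x : X} (hx : x ≠ 0) :
    finrank K (T.flip x).ker ≤ 2 := by
  have := hT.finite
  have hrank := (T.flip x).finrank_range_add_finrank_ker
  have hrange := hT.two_le_finrank_range_flip hx
  rw [hT.finrank_eq_four] at hrank
  lia

end IsPrimitiveFamily

end PrimitiveFamily

section DoubleCounting

theorem sum_card_ker_flip_eq_sum_card_ker {R V X Z : Type*} [CommRing R] [AddCommGroup V]
    [Module R V] [Fintype V] [AddCommGroup X] [Module R X] [Fintype X] [AddCommGroup Z]
    [Module R Z] (T : V →ₗ[R] X →ₗ[R] Z) :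
    ∑ x, Nat.card (T.flip x).ker = ∑ M, Nat.card (T M).ker := by
  classical
  simp only [Nat.card_eq_fintype_card, Fintype.card_subtype, LinearMap.mem_ker,
    LinearMap.flip_apply]
  exact Finset.sum_card_bipartiteAbove_eq_sum_card_bipartiteBelow fun x M => T M x = 0

theorem sum_add_ite_eq_zero {K X : Type*} [DivisionRing K] [AddCommGroup X] [Module K X]
    [Fintype X] [DecidableEq X] (a b : ℕ) :
    ∑ x : X, (a + if x = 0 then b else 0) = Nat.card K ^ finrank K X * a + b := by
  rw [Finset.sum_add_distrib, Finset.sum_const, Finset.card_univ, ← Nat.card_eq_fintype_card,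
    natCard_eq_pow_finrank (K := K), Fintype.sum_ite_eq', smul_eq_mul]

namespace IsPrimitiveFamily

variable {K V X Z : Type*} [Field K] [Finite K] [AddCommGroup V] [Module K V]
  [AddCommGroup X] [Module K X] [AddCommGroup Z] [Module K Z] {T : V →ₗ[K] X →ₗ[K] Z}

theorem sum_card_ker_flip_add [Fintype X] (hT : IsPrimitiveFamily T) {k : ℕ}
    (hX : finrank K X = k + 2) :
    ∑ x, Nat.card (T.flip x).ker + Nat.card K ^ k =
      Nat.card K ^ (k + 2) + Nat.card K ^ 4 * Nat.card K ^ k := by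
  classical
  have := hT.finite
  have := Module.finite_of_finite K (M := V)
  have := Fintype.ofFinite V
  have hker {M : V} (hM : M ≠ 0) : Nat.card (T M).ker = Nat.card K ^ k := by
    have hrank := (T M).finrank_range_add_finrank_ker
    rw [hT.finrank_range M hM, hX, add_comm, Nat.add_right_cancel_iff] at hrank
    rw [natCard_eq_pow_finrank (K := K), hrank]
  have hker_zero : Nat.card (T 0).ker = Nat.card K ^ (k + 2) := by
    rw [map_zero, LinearMap.ker_zero, natCard_eq_pow_finrank (K := K), finrank_top, hX]
  have hcard : Fintype.card V = Nat.card K ^ 4 := by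
    rw [← Nat.card_eq_fintype_card, natCard_eq_pow_finrank (K := K), hT.finrank_eq_four]
  rw [sum_card_ker_flip_eq_sum_card_ker, ← Finset.add_sum_erase _ _ (Finset.mem_univ (0 : V)),
    hker_zero, Finset.sum_congr rfl fun M hM => hker (Finset.ne_of_mem_erase hM), Finset.sum_const,
    smul_eq_mul, add_assoc, ← Nat.succ_mul, Nat.succ_eq_add_one,
    Finset.card_erase_add_one (Finset.mem_univ 0), Finset.card_univ, hcard]

theorem card_ker_flip_le (hT : IsPrimitiveFamily T) [Module.Finite K X] [DecidableEq X] (x : X) :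
    Nat.card (T.flip x).ker ≤
      Nat.card K ^ 2 + if x = 0 then Nat.card K ^ 4 - Nat.card K ^ 2 else 0 := by
  have := hT.finite
  have hpow {i j : ℕ} (hij : i ≤ j) : Nat.card K ^ i ≤ Nat.card K ^ j :=
    Nat.pow_le_pow_right Nat.card_pos hij
  rw [natCard_eq_pow_finrank (K := K)]
  split_ifs with hx
  · rw [add_tsub_cancel_of_le (hpow (by norm_num)), ← hT.finrank_eq_four]
    exact hpow (Submodule.finrank_le _)
  · exact hpow (hT.finrank_ker_flip_le_two hx)

theorem finrank_le_four [Module.Finite K X] (hT : IsPrimitiveFamily T) : finrank K X ≤ 4 := by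
  classical
  have := Module.finite_of_finite K (M := X)
  have := Fintype.ofFinite X
  obtain ⟨k, hk⟩ := Nat.exists_eq_add_of_le' hT.two_le_finrank
  have hsum := hT.sum_card_ker_flip_add hk
  have hle := Finset.sum_le_sum fun x (_ : x ∈ Finset.univ) => hT.card_ker_flip_le x
  rw [sum_add_ite_eq_zero (K := K), hk, pow_add, mul_assoc, ← pow_add] at hle
  have hq : 1 < Nat.card K := Finite.one_lt_card
  have hq4 : Nat.card K ^ 2 ≤ Nat.card K ^ 4 := Nat.pow_le_pow_right (by lia) (by norm_num)
  have hcount : Nat.card K ^ k * Nat.card K ^ 2 + Nat.card K ^ 2 ≤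
      Nat.card K ^ 2 * Nat.card K ^ 2 + Nat.card K ^ k := by
    rw [← pow_add, ← pow_add]
    lia
  by_contra! hlt
  have hpow : Nat.card K ^ 2 < Nat.card K ^ k := Nat.pow_lt_pow_right hq (by lia)
  have hsq : 1 < Nat.card K ^ 2 := Nat.one_lt_pow two_ne_zero hq
  nlinarith

theorem finrank_ker_flip_eq_two [Module.Finite K X] (hT : IsPrimitiveFamily T)
    (hX : finrank K X = 4) {x : X} (hx : x ≠ 0) : finrank K (T.flip x).ker = 2 := by
  classical
  have := hT.finite
  have := Module.finite_of_finite K (M := X)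
  have := Fintype.ofFinite X
  have hsum := hT.sum_card_ker_flip_add (k := 2) hX
  have hq : 1 < Nat.card K := Finite.one_lt_card
  have hq4 : Nat.card K ^ 2 ≤ Nat.card K ^ 4 := Nat.pow_le_pow_right (by lia) (by norm_num)
  have heq : ∑ x, Nat.card (T.flip x).ker =
      ∑ x : X, (Nat.card K ^ 2 + if x = 0 then Nat.card K ^ 4 - Nat.card K ^ 2 else 0) := by
    rw [sum_add_ite_eq_zero (K := K), hX]
    lia
  have hx2 := (Finset.sum_eq_sum_iff_of_le fun x _ => hT.card_ker_flip_le x).1 heq x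
    (Finset.mem_univ x)
  rw [if_neg hx, add_zero, natCard_eq_pow_finrank (K := K)] at hx2
  exact Nat.pow_right_injective hq hx2

theorem card_ker_flip_le_of_forall_mem [Module.Finite K X] [DecidableEq X]
    (hT : IsPrimitiveFamily T) {S : Submodule K X} [DecidablePred (· ∈ S)]
    (hS : ∀ x, finrank K (T.flip x).ker = 2 → x ∈ S) (x : X) :
    Nat.card (T.flip x).ker ≤ Nat.card K +
      (if x = 0 then Nat.card K ^ 4 - Nat.card K ^ 2 else 0) +
      if x ∈ S then Nat.card K ^ 2 - Nat.card K else 0 := by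
  have := hT.finite
  by_cases hxS : x ∈ S
  · rw [if_pos hxS, add_right_comm, add_tsub_cancel_of_le (Nat.le_self_pow two_ne_zero _)]
    exact hT.card_ker_flip_le x
  · have hx : x ≠ 0 := fun h => hxS (h ▸ zero_mem S)
    have hlt : finrank K (T.flip x).ker ≤ 1 :=
      Nat.le_of_lt_succ ((hT.finrank_ker_flip_le_two hx).lt_of_ne fun h => hxS (hS x h))
    rw [if_neg hxS, if_neg hx, natCard_eq_pow_finrank (K := K)]
    exact (Nat.pow_le_pow_right Nat.card_pos hlt).trans_eq (pow_one _)

theorem eq_top_of_forall_finrank_ker_flip_eq_two_mem [Module.Finite K X]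
    (hT : IsPrimitiveFamily T) (hX : finrank K X = 3) {S : Submodule K X}
    (hS : ∀ x, finrank K (T.flip x).ker = 2 → x ∈ S) : S = ⊤ := by
  classical
  have := Module.finite_of_finite K (M := X)
  have := Fintype.ofFinite X
  by_contra hS_ne_top
  have hsum := hT.sum_card_ker_flip_add (k := 1) hX
  have hle := Finset.sum_le_sum fun x (_ : x ∈ Finset.univ) =>
    hT.card_ker_flip_le_of_forall_mem hS x
  have hsumS (m : ℕ) : ∑ x, (if x ∈ S then m else 0) = Nat.card S * m := by
    rw [← Finset.sum_filter, Finset.sum_const, smul_eq_mul, Nat.card_eq_fintype_card,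
      Fintype.card_subtype]
  rw [Finset.sum_add_distrib, sum_add_ite_eq_zero (K := K), hX, hsumS] at hle
  set q := Nat.card K
  have hq : 1 < q := Finite.one_lt_card
  have hcardS : Nat.card S ≤ q ^ 2 := by
    have hlt := Submodule.finrank_lt hS_ne_top
    rw [natCard_eq_pow_finrank (K := K)]
    exact Nat.pow_le_pow_right hq.le (by lia)
  have hmul := Nat.mul_le_mul_right (q ^ 2 - q) hcardS
  have hq2 : q ≤ q ^ 2 := Nat.le_self_pow two_ne_zero q
  have hq4 : q ^ 2 ≤ q ^ 4 := Nat.pow_le_pow_right hq.le (by norm_num)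
  zify [hq2, hq4] at hsum hle hmul hq
  have hpos : 0 < (q : ℤ) * (q - 1) ^ 2 * (q ^ 2 - q - 1) := by
    have : (0 : ℤ) < q ^ 2 - q - 1 := by nlinarith
    have : (0 : ℤ) < q - 1 := by lia
    positivity
  refine hpos.not_ge ?_
  linear_combination hle + hmul - hsum

theorem exists_linearIndependent_finrank_ker_flip_eq_two [Module.Finite K X]
    (hT : IsPrimitiveFamily T) (hX : finrank K X = 3) :
    ∃ f : Fin 3 → X, LinearIndependent K f ∧ ∀ i, finrank K (T.flip (f i)).ker = 2 := by
  have htop : Submodule.span K {x | finrank K (T.flip x).ker = 2} = ⊤ :=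
    hT.eq_top_of_forall_finrank_ker_flip_eq_two_mem hX fun _ h => Submodule.subset_span h
  have hspan : finrank K (Submodule.span K {x | finrank K (T.flip x).ker = 2}) = 3 := by
    rw [htop, finrank_top, hX]
  obtain ⟨f, hf, -, hli⟩ :=
    Submodule.exists_fun_fin_finrank_span_eq K {x | finrank K (T.flip x).ker = 2}
  exact ⟨f ∘ Fin.cast hspan.symm, hli.comp _ (Fin.cast_injective _), fun i => hf _⟩

end IsPrimitiveFamily

end DoubleCounting

section SmallSubspaces

theorem eq_of_mem_of_finrank_le_one {K Z ι : Type*} [Field K] [AddCommGroup Z] [Module K Z]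
    {f : ι → Z} (hf : LinearIndependent K f) {S : Submodule K Z} [Module.Finite K S]
    (hS : finrank K S ≤ 1) {i j : ι} (hi : f i ∈ S) (hj : f j ∈ S) : i = j := by
  by_contra hij
  have hpair : LinearIndependent K (![⟨f i, hi⟩, ⟨f j, hj⟩] : Fin 2 → S) := by
    have hinj : Function.Injective ![i, j] := by
      simpa [Function.Injective, Fin.forall_fin_two] using ⟨hij, Ne.symm hij⟩
    refine .of_comp S.subtype ?_
    convert hf.comp ![i, j] hinj using 1
    ext k
    fin_cases k <;> rfl
  simpa using hpair.fintype_card_le_finrank.trans hS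

theorem card_filter_mem_eq_pow_finrank {K V : Type*} [Field K] [AddCommGroup V] [Module K V]
    [Module.Finite K V] [Fintype V] (S : Submodule K V) [DecidablePred (· ∈ S)] :
    (Finset.univ.filter (· ∈ S)).card = Nat.card K ^ finrank K S := by
  rw [← Fintype.card_subtype, ← Nat.card_eq_fintype_card, ← natCard_eq_pow_finrank (K := K)]

theorem exists_forall_notMem_of_card_mul_lt {K V ι : Type*} [Field K] [Finite K] [AddCommGroup V]
    [Module K V] [Module.Finite K V] [Fintype ι] {S : ι → Submodule K V} {k : ℕ}
    (hS : ∀ i, finrank K (S i) ≤ k)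
    (hcard : Fintype.card ι * (Nat.card K ^ k - 1) < Nat.card K ^ finrank K V - 1) :
    ∃ v, ∀ i, v ∉ S i := by
  classical
  have := Module.finite_of_finite K (M := V)
  have := Fintype.ofFinite V
  by_contra! hcover
  have hcover' : ({0}ᶜ : Finset V) ⊆
      Finset.univ.biUnion fun i => (Finset.univ.filter (· ∈ S i)).erase 0 := by
    intro v hv
    obtain ⟨i, hi⟩ := hcover v
    simpa using ⟨by simpa using hv, i, hi⟩
  have hcardS (i : ι) : ((Finset.univ.filter (· ∈ S i)).erase 0).card ≤ Nat.card K ^ k - 1 := by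
    rw [Finset.card_erase_of_mem (by simp), card_filter_mem_eq_pow_finrank (K := K)]
    exact Nat.sub_le_sub_right (Nat.pow_le_pow_right Nat.card_pos (hS i)) 1
  have hle := (Finset.card_le_card hcover').trans
    (Finset.card_biUnion_le_card_mul _ _ _ fun i _ => hcardS i)
  rw [Finset.card_compl, Finset.card_singleton, ← Nat.card_eq_fintype_card,
    natCard_eq_pow_finrank (K := K)] at hle
  exact hcard.not_ge hle

theorem linearIndependent_fin_three_zmod_two_iff {Z : Type*} [AddCommGroup Z] [Module (ZMod 2) Z]
    {f : Fin 3 → Z} : LinearIndependent (ZMod 2) f ↔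
      (∀ i, f i ≠ 0) ∧ Function.Injective f ∧ f 0 + f 1 + f 2 ≠ 0 := by
  refine ⟨fun h => ⟨h.ne_zero, h.injective, fun h0 => ?_⟩, fun ⟨hne, hinj, hsum⟩ => ?_⟩
  · exact one_ne_zero (Fintype.linearIndependent_iff.1 h 1 (by simpa [Fin.sum_univ_three]) 0)
  · have hpair (i j : Fin 3) (hij : i ≠ j) : f i + f j ≠ 0 := fun h =>
      hij (hinj (sub_eq_zero.1 (by rwa [ZModModule.sub_eq_add])))
    rw [Fintype.linearIndependent_iff]
    intro g hg
    have hcases (i : Fin 3) : g i = 0 ∨ g i = 1 := by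
      generalize g i = c
      decide +revert
    rw [Fin.sum_univ_three] at hg
    rw [Fin.forall_fin_succ, Fin.forall_fin_two]
    rcases hcases 0 with h0 | h0 <;> rcases hcases 1 with h1 | h1 <;>
      rcases hcases 2 with h2 | h2 <;>
      simp only [h0, h1, h2, zero_smul, one_smul, zero_add, add_zero] at hg
    · exact ⟨h0, h1, h2⟩
    · exact absurd hg (hne 2)
    · exact absurd hg (hne 1)
    · exact absurd hg (hpair 1 2 (by decide))
    · exact absurd hg (hne 0)
    · exact absurd hg (hpair 0 2 (by decide))
    · exact absurd hg (hpair 0 1 (by decide))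
    · exact absurd hg hsum

end SmallSubspaces

section Independent

variable {X : Type*} [AddCommGroup X] [Module (ZMod 2) X] {r : X → X → Prop}

theorem rel_or_rel_of_forall_linearIndependent (hsymm : ∀ ⦃a b⦄, r a b → r b a)
    (hr : ∀ f : Fin 3 → X, LinearIndependent (ZMod 2) f → ¬ Pairwise fun i j => ¬ r (f i) (f j))
    {u v a : X} (huv : ¬ r u v) (hu : u ≠ 0) (hv : v ≠ 0) (ha : a ≠ 0) (hne : u ≠ v)
    (hau : a ≠ u) (hav : a ≠ v) (hauv : a ≠ u + v) : r u a ∨ r v a := by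
  by_contra! h
  refine hr ![u, v, a] (linearIndependent_fin_three_zmod_two_iff.2 ⟨?_, ?_, ?_⟩) ?_
  · simp [Fin.forall_fin_succ, *]
  · simp [Function.Injective, Fin.forall_fin_succ, *, Ne.symm]
  · simpa [← ZModModule.sub_eq_add, sub_eq_zero, eq_comm] using hauv
  · simpa [Pairwise, Fin.forall_fin_succ] using
      ⟨⟨huv, h.1⟩, ⟨mt (@hsymm _ _) huv, h.2⟩, mt (@hsymm _ _) h.1, mt (@hsymm _ _) h.2⟩

theorem two_mul_card_le_of_forall_linearIndependent [Fintype X] [DecidableRel r]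
    (hsymm : ∀ ⦃a b⦄, r a b → r b a) (hrefl : ∀ ⦃a⦄, a ≠ 0 → r a a)
    (hadd : ∀ ⦃a b⦄, r a b → r a (a + b))
    (hr : ∀ f : Fin 3 → X, LinearIndependent (ZMod 2) f → ¬ Pairwise fun i j => ¬ r (f i) (f j))
    {u v : X} (huv : ¬ r u v) (hu : u ≠ 0) (hv : v ≠ 0) :
    2 * Fintype.card X ≤ (Finset.univ.filter (r u)).card + (Finset.univ.filter (r v)).card +
      (Finset.univ.filter (r (u + v))).card + 3 := by
  classical
  have hcancel (a b : X) : a + (a + b) = b := by rw [← add_assoc, ZModModule.add_self, zero_add]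
  have hzero {a : X} (ha : a ≠ 0) : r a 0 := ZModModule.add_self a ▸ hadd (hrefl ha)
  have hne : u ≠ v := fun h => huv (h ▸ hrefl hu)
  have hw : u + v ≠ 0 := by rwa [← ZModModule.sub_eq_add, sub_ne_zero]
  have huw : ¬ r u (u + v) := fun h => huv (hcancel u v ▸ hadd h)
  have hvw : ¬ r v (u + v) := fun h => huv (hsymm (hcancel v u ▸ add_comm u v ▸ hadd h))
  have hcount (a : X) : 2 ≤ (if r u a then 1 else 0) + (if r v a then 1 else 0) +
      (if r (u + v) a then 1 else 0) + if a ∈ ({u, v, u + v} : Finset X) then 1 else 0 := by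
    by_cases ha0 : a = 0
    · grind
    by_cases ha : a ∈ ({u, v, u + v} : Finset X)
    · have haa : r a a := hrefl ha0
      grind
    · have hau : a ≠ u := by grind
      have hav : a ≠ v := by grind
      have haw : a ≠ u + v := by grind
      have hr₁ := rel_or_rel_of_forall_linearIndependent hsymm hr huv hu hv ha0 hne hau hav haw
      have hr₂ := rel_or_rel_of_forall_linearIndependent hsymm hr huw hu hw ha0 (by simpa using hv)
        hau haw (by rwa [hcancel])
      have hr₃ := rel_or_rel_of_forall_linearIndependent hsymm hr hvw hv hw ha0 (by simpa using hu)
        hav haw (by rwa [add_comm u, hcancel])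
      grind
  have hsum := Finset.sum_le_sum fun a (_ : a ∈ Finset.univ) => hcount a
  simp only [Finset.sum_add_distrib, Finset.sum_boole, Finset.sum_const, Finset.card_univ,
    smul_eq_mul, Nat.cast_id, Finset.filter_univ_mem] at hsum
  have := Finset.card_le_three (a := u) (b := v) (c := u + v)
  lia

theorem exists_linearIndependent_pairwise_not_rel [Fintype X] [DecidableRel r]
    (hX : 2 < finrank (ZMod 2) X) (hsymm : ∀ ⦃a b⦄, r a b → r b a)
    (hrefl : ∀ ⦃a⦄, a ≠ 0 → r a a) (hadd : ∀ ⦃a b⦄, r a b → r a (a + b))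
    (hcard : ∀ ⦃a⦄, a ≠ 0 → 2 * (Finset.univ.filter (r a)).card ≤ Fintype.card X) :
    ∃ f : Fin 3 → X, LinearIndependent (ZMod 2) f ∧ Pairwise fun i j => ¬ r (f i) (f j) := by
  by_contra! hr
  have hcardX : 8 ≤ Fintype.card X := by
    rw [← Nat.card_eq_fintype_card, natCard_eq_pow_finrank (K := ZMod 2), Nat.card_zmod]
    exact Nat.pow_le_pow_right (n := 2) (i := 3) (by norm_num) hX
  have : Nontrivial X := Fintype.one_lt_card_iff_nontrivial.1 (by lia)
  obtain ⟨u, hu⟩ := exists_ne (0 : X)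
  obtain ⟨v, huv⟩ : ∃ v, ¬ r u v := by
    by_contra! h
    have := hcard hu
    rw [Finset.filter_true_of_mem fun v _ => h v, Finset.card_univ] at this
    lia
  have hv : v ≠ 0 := fun h => huv (h ▸ ZModModule.add_self u ▸ hadd (hrefl hu))
  have huv0 : u + v ≠ 0 := by
    rw [← ZModModule.sub_eq_add, sub_ne_zero]
    exact fun h => huv (h ▸ hrefl hu)
  have := two_mul_card_le_of_forall_linearIndependent hsymm hrefl hadd hr huv hu hv
  have := hcard hu
  have := hcard hv
  have := hcard huv0
  lia

end Independent

section Forms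

variable {K V X Y : Type*} [Field K] [AddCommGroup V] [Module K V] [AddCommGroup X] [Module K X]
  [AddCommGroup Y] [Module K Y] {T : V →ₗ[K] X →ₗ[K] Y →ₗ[K] K}

/-- The family `T` of bilinear forms with the two arguments of each form interchanged; for
matrices this is transposition. -/
def swapForm (T : V →ₗ[K] X →ₗ[K] Y →ₗ[K] K) : V →ₗ[K] Y →ₗ[K] X →ₗ[K] K :=
  (LinearMap.lflip (R₀ := K)).toLinearMap ∘ₗ T

/-- The vectors `y` with `T M x y = 0` for all `M`. They annihilate the values at `x` of the whole
family `T`, so their dimension determines that of the space of those `M` with `T M x = 0`. -/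
def orthogonal (T : V →ₗ[K] X →ₗ[K] Y →ₗ[K] K) (x : X) : Submodule K Y :=
  (T.flip x).range.dualCoannihilator

theorem mem_orthogonal {x : X} {y : Y} : y ∈ orthogonal T x ↔ ∀ M, T M x y = 0 := by
  simp [orthogonal, LinearMap.ext_iff]

theorem mem_orthogonal_swapForm {x : X} {y : Y} :
    x ∈ orthogonal (swapForm T) y ↔ y ∈ orthogonal T x := by
  rw [mem_orthogonal, mem_orthogonal]
  rfl

theorem finrank_orthogonal_add [Module.Finite K V] [Module.Finite K Y] (x : X) :
    finrank K (orthogonal T x) + finrank K V = finrank K (T.flip x).ker + finrank K Y := by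
  have := Subspace.finrank_add_finrank_dualCoannihilator_eq (T.flip x).range
  have := (T.flip x).finrank_range_add_finrank_ker
  unfold orthogonal
  lia

theorem apply_eq_zero_of_apply_add_eq_zero {x x' : X}
    (h : Codisjoint (orthogonal T x) (orthogonal T x')) {M : V} (hM : T M (x + x') = 0) :
    T M x = 0 := by
  rw [← LinearMap.ker_eq_top, ← top_le_iff, ← h.eq_top, sup_le_iff]
  refine ⟨fun y hy => mem_orthogonal.1 hy M, fun y hy => ?_⟩
  have hy' : T M x y + T M x' y = 0 := by rw [← LinearMap.add_apply, ← map_add, hM]; rfl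
  rwa [mem_orthogonal.1 hy M, add_zero] at hy'

theorem exists_apply_eq_zero_or_apply_sum_eq_zero {V X Y : Type*} [AddCommGroup V]
    [Module (ZMod 2) V] [AddCommGroup X] [Module (ZMod 2) X] [Module.Finite (ZMod 2) X]
    [AddCommGroup Y] [Module (ZMod 2) Y] {T : V →ₗ[ZMod 2] X →ₗ[ZMod 2] Y →ₗ[ZMod 2] ZMod 2}
    {f : Fin 3 → X}
    (hdis : Pairwise fun i j => Codisjoint (orthogonal T (f i)) (orthogonal T (f j))) {M : V}
    (hM : finrank (ZMod 2) (T M).range < 3) :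
    (∃ i, T M (f i) = 0) ∨ T M (f 0 + f 1 + f 2) = 0 := by
  have hdep : ¬ LinearIndependent (ZMod 2) fun i => T M (f i) := fun hli => by
    have hle : Submodule.span (ZMod 2) (Set.range fun i => T M (f i)) ≤ (T M).range :=
      Submodule.span_le.2 (Set.range_subset_iff.2 fun i => ⟨f i, rfl⟩)
    have := (finrank_span_eq_card hli).symm.trans_le (Submodule.finrank_mono hle)
    rw [Fintype.card_fin] at this
    lia
  rw [linearIndependent_fin_three_zmod_two_iff] at hdep
  by_contra! h
  refine hdep ⟨h.1, fun i j hij => by_contra fun hne => h.1 i ?_, by simpa using h.2⟩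
  refine apply_eq_zero_of_apply_add_eq_zero (hdis hne) ?_
  rw [map_add, ← ZModModule.sub_eq_add, sub_eq_zero]
  exact hij

/-- A family of bilinear forms which is primitive on both sides, so that all that is proved about
one argument holds for the other one. -/
structure IsPrimitiveForm (T : V →ₗ[K] X →ₗ[K] Y →ₗ[K] K) : Prop where
  left : IsPrimitiveFamily T
  right : IsPrimitiveFamily (swapForm T)

theorem IsPrimitiveForm.swap (hT : IsPrimitiveForm T) : IsPrimitiveForm (swapForm T) :=
  ⟨hT.right, hT.left⟩

theorem IsPrimitiveForm.finrank_orthogonal_add_four [Module.Finite K Y] (hT : IsPrimitiveForm T)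
    (x : X) : finrank K (orthogonal T x) + 4 = finrank K (T.flip x).ker + finrank K Y := by
  have := hT.left.finite
  rw [← hT.left.finrank_eq_four, finrank_orthogonal_add]

end Forms

namespace IsPrimitiveForm

section Finite

variable {K V X Y : Type*} [Field K] [AddCommGroup V] [Module K V]
  [AddCommGroup X] [Module K X] [AddCommGroup Y] [Module K Y] [Module.Finite K Y]
  {T : V →ₗ[K] X →ₗ[K] Y →ₗ[K] K}

theorem exists_apply_ne_zero_of_linearIndependent (hT : IsPrimitiveForm T)
    (hX : finrank K X = 3) (hY : finrank K Y = 3) {b : Fin 3 → X} {z : Fin 2 → Y}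
    (hb : LinearIndependent K b) (hz : LinearIndependent K z) {M : V} (hM : M ≠ 0) :
    ∃ i j, T M (b i) (z j) ≠ 0 := by
  by_contra! h
  have hspan : Submodule.span K (Set.range b) = ⊤ :=
    hb.span_eq_top_of_card_eq_finrank (by rw [hX, Fintype.card_fin])
  have hker (j : Fin 2) : z j ∈ (swapForm T M).ker :=
    LinearMap.ext_on_range hspan fun i => h i j
  have hker_le : finrank K (swapForm T M).ker ≤ 1 := by
    have := (swapForm T M).finrank_range_add_finrank_ker
    have := hT.right.finrank_range M hM
    lia
  exact zero_ne_one (eq_of_mem_of_finrank_le_one hz hker_le (hker 0) (hker 1))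

theorem linearIndependent_of_apply_eq_zero (hT : IsPrimitiveForm T) (hX : finrank K X = 3)
    (hY : finrank K Y = 3) {b : Fin 3 → X} {y : Fin 3 → Y} (hb : LinearIndependent K b)
    (hdiag : ∀ M i, T M (b i) (y i) = 0) (hoff : ∀ i j, i ≠ j → ∃ M, T M (b i) (y j) ≠ 0) :
    LinearIndependent K y := by
  have hsmul {i j : Fin 3} (hij : j ≠ i) (c : K) : c • y j ≠ y i := fun h => by
    obtain ⟨M, hM⟩ := hoff j i hij
    rw [← h, map_smul, hdiag, smul_zero] at hM
    exact hM rfl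
  have hy₁ : y 1 ≠ 0 := fun h => hsmul (i := 1) (j := 0) (by decide) 0 (by rw [h, zero_smul])
  have hpair : LinearIndependent K (Fin.init y) :=
    linearIndependent_fin2.2 ⟨hy₁, hsmul (i := 0) (j := 1) (by decide)⟩
  rw [linearIndependent_finSucc']
  refine ⟨hpair, fun hmem => ?_⟩
  obtain ⟨c, hc⟩ := (Submodule.mem_span_range_iff_exists_fun K).1 hmem
  replace hc : c 0 • y 0 + c 1 • y 1 = y 2 := (Fin.sum_univ_two _).symm.trans hc
  have hc₁ : c 1 ≠ 0 := fun h => by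
    rw [h, zero_smul, add_zero] at hc
    exact hsmul (i := 2) (j := 0) (by decide) (c 0) hc
  have := hT.left.finite
  obtain ⟨M, hMker, hM⟩ := Submodule.exists_mem_ne_zero_of_ne_bot
    (LinearMap.ker_ne_bot_of_finrank_lt (f := LinearMap.pi ![(T.flip (b 1)).flip (y 0),
      (T.flip (b 2)).flip (y 0), (T.flip (b 0)).flip (y 1)])
      (by rw [finrank_fin_fun, hT.left.finrank_eq_four]; norm_num))
  have h₁₀ : T M (b 1) (y 0) = 0 := congrFun (LinearMap.mem_ker.1 hMker) 0
  have h₂₀ : T M (b 2) (y 0) = 0 := congrFun (LinearMap.mem_ker.1 hMker) 1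
  have h₀₁ : T M (b 0) (y 1) = 0 := congrFun (LinearMap.mem_ker.1 hMker) 2
  have h₂₁ : T M (b 2) (y 1) = 0 := by
    have h₂₂ := hdiag M 2
    rw [← hc, map_add, map_smul, map_smul, h₂₀, smul_zero, zero_add] at h₂₂
    exact (smul_eq_zero.1 h₂₂).resolve_left hc₁
  obtain ⟨i, j, hij⟩ := hT.exists_apply_ne_zero_of_linearIndependent hX hY hb hpair hM
  have hzero : ∀ i j, T M (b i) (Fin.init y j) = 0 := by
    simp only [Fin.forall_fin_succ, IsEmpty.forall_iff, and_true]
    exact ⟨⟨hdiag M 0, h₀₁⟩, ⟨h₁₀, hdiag M 1⟩, h₂₀, h₂₁⟩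
  exact hij (hzero i j)

variable [Module.Finite K X]

theorem finrank_orthogonal_eq_two [Finite K] (hT : IsPrimitiveForm T) (hX : finrank K X = 4)
    (hY : finrank K Y = 4) {x : X} (hx : x ≠ 0) : finrank K (orthogonal T x) = 2 := by
  have := hT.finrank_orthogonal_add_four x
  have := hT.left.finrank_ker_flip_eq_two hX hx
  lia

theorem finrank_orthogonal_swapForm_le_one (hT : IsPrimitiveForm T) (hX : finrank K X = 3)
    {y : Y} (hy : y ≠ 0) : finrank K (orthogonal (swapForm T) y) ≤ 1 := by
  have := hT.swap.finrank_orthogonal_add_four y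
  have := hT.right.finrank_ker_flip_le_two hy
  lia

theorem exists_linearIndependent_hollow [Finite K] (hT : IsPrimitiveForm T) (hX : finrank K X = 3)
    (hY : finrank K Y = 3) :
    ∃ (b : Fin 3 → X) (y : Fin 3 → Y), LinearIndependent K b ∧ LinearIndependent K y ∧
      (∀ M i, T M (b i) (y i) = 0) ∧ ∀ i j, i ≠ j → ∃ M, T M (b i) (y j) ≠ 0 := by
  obtain ⟨b, hb, hker⟩ := hT.left.exists_linearIndependent_finrank_ker_flip_eq_two hX
  have hex (i : Fin 3) : ∃ y ∈ orthogonal T (b i), y ≠ 0 := by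
    refine Submodule.exists_mem_ne_zero_of_ne_bot fun hbot => ?_
    have := hT.finrank_orthogonal_add_four (b i)
    rw [hbot, finrank_bot, hker, hY] at this
    lia
  choose y hy hy0 using hex
  have hdiag (M : V) (i : Fin 3) : T M (b i) (y i) = 0 := mem_orthogonal.1 (hy i) M
  have hoff (i j : Fin 3) (hij : i ≠ j) : ∃ M, T M (b i) (y j) ≠ 0 := by
    by_contra! h
    exact hij (eq_of_mem_of_finrank_le_one hb (hT.finrank_orthogonal_swapForm_le_one hX (hy0 j))
      (mem_orthogonal_swapForm.2 (mem_orthogonal.2 h)) (mem_orthogonal_swapForm.2 (hy j)))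
  exact ⟨b, y, hb, hT.linearIndependent_of_apply_eq_zero hX hY hb hdiag hoff, hdiag, hoff⟩

end Finite

section ZModTwo

variable {V X Y : Type*} [AddCommGroup V] [Module (ZMod 2) V] [AddCommGroup X] [Module (ZMod 2) X]
  [Module.Finite (ZMod 2) X] [AddCommGroup Y] [Module (ZMod 2) Y] [Module.Finite (ZMod 2) Y]
  {T : V →ₗ[ZMod 2] X →ₗ[ZMod 2] Y →ₗ[ZMod 2] ZMod 2}

theorem not_pairwise_disjoint_orthogonal (hT : IsPrimitiveForm T)
    (hY : finrank (ZMod 2) Y = 4) {f : Fin 3 → X} (hf : LinearIndependent (ZMod 2) f)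
    (hker : ∀ i, finrank (ZMod 2) (T.flip (f i)).ker = 2) :
    ¬ Pairwise fun i j => Disjoint (orthogonal T (f i)) (orthogonal T (f j)) := by
  intro hdis
  have := hT.left.finite
  have hcodis : Pairwise fun i j => Codisjoint (orthogonal T (f i)) (orthogonal T (f j)) := by
    intro i j hij
    rw [codisjoint_iff]
    refine Submodule.eq_top_of_disjoint _ _ ?_ (hdis hij)
    have := hT.finrank_orthogonal_add_four (f i)
    have := hT.finrank_orthogonal_add_four (f j)
    have := hker i
    have := hker j
    lia
  let g : Option (Fin 3) → X := fun o => o.elim (f 0 + f 1 + f 2) f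
  have hsum : f 0 + f 1 + f 2 ≠ 0 := (linearIndependent_fin_three_zmod_two_iff.1 hf).2.2
  obtain ⟨M, hM⟩ := exists_forall_notMem_of_card_mul_lt (K := ZMod 2) (k := 2)
    (S := fun o => (T.flip (g o)).ker)
    (Option.rec (hT.left.finrank_ker_flip_le_two hsum) fun i => (hker i).le)
    (by simp [hT.left.finrank_eq_four])
  have hM0 : M ≠ 0 := fun h => hM none (h ▸ zero_mem _)
  rcases exists_apply_eq_zero_or_apply_sum_eq_zero hcodis
    ((hT.left.finrank_range M hM0).trans_lt (by norm_num)) with ⟨i, hi⟩ | h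
  · exact hM (some i) hi
  · exact hM none h

theorem finrank_right_ne_four_of_finrank_left_eq_three (hT : IsPrimitiveForm T)
    (hX : finrank (ZMod 2) X = 3) : finrank (ZMod 2) Y ≠ 4 := by
  intro hY
  obtain ⟨f, hf, hker⟩ := hT.left.exists_linearIndependent_finrank_ker_flip_eq_two hX
  refine hT.not_pairwise_disjoint_orthogonal hY hf hker fun i j hij => ?_
  refine Submodule.disjoint_def.2 fun y hi hj => by_contra fun hy => ?_
  exact hij (eq_of_mem_of_finrank_le_one hf (hT.finrank_orthogonal_swapForm_le_one hX hy)
    (mem_orthogonal_swapForm.2 hi) (mem_orthogonal_swapForm.2 hj))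

theorem card_not_disjoint_orthogonal_le (hT : IsPrimitiveForm T) [Fintype X]
    (hX : finrank (ZMod 2) X = 4) (hY : finrank (ZMod 2) Y = 4) {x : X} (hx : x ≠ 0)
    [DecidablePred fun a => ¬ Disjoint (orthogonal T x) (orthogonal T a)] :
    (Finset.univ.filter fun a => ¬ Disjoint (orthogonal T x) (orthogonal T a)).card ≤ 8 := by
  classical
  have := Module.finite_of_finite (ZMod 2) (M := Y)
  have := Fintype.ofFinite Y
  let S : Finset Y := (Finset.univ.filter (· ∈ orthogonal T x)).erase 0
  let A (y : Y) : Finset X := Finset.univ.filter (· ∈ orthogonal (swapForm T) y)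
  have hS : S.card = 3 := by
    rw [Finset.card_erase_of_mem (by simp), card_filter_mem_eq_pow_finrank (K := ZMod 2),
      hT.finrank_orthogonal_eq_two hX hY hx, Nat.card_zmod]
    rfl
  have hA {y : Y} (hy : y ∈ S) : (A y \ {0, x}).card = 2 := by
    obtain ⟨hy0, hyx⟩ := Finset.mem_erase.1 hy
    have hsub : {0, x} ⊆ A y := by
      simpa [A, Finset.insert_subset_iff] using
        mem_orthogonal_swapForm.2 (Finset.mem_filter_univ _ |>.1 hyx)
    rw [Finset.card_sdiff_of_subset hsub, Finset.card_pair hx.symm, card_filter_mem_eq_pow_finrank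
      (K := ZMod 2), hT.swap.finrank_orthogonal_eq_two hY hX hy0, Nat.card_zmod]
    rfl
  have hsub : (Finset.univ.filter fun a => ¬ Disjoint (orthogonal T x) (orthogonal T a)) ⊆
      {0, x} ∪ S.biUnion fun y => A y \ {0, x} := by
    intro a ha
    rw [Finset.mem_filter_univ, Submodule.disjoint_def] at ha
    push Not at ha
    obtain ⟨y, hyx, hya, hy0⟩ := ha
    have hyS : y ∈ S := by simpa [S] using ⟨hy0, hyx⟩
    have haA : a ∈ A y := by simpa [A] using mem_orthogonal_swapForm.2 hya
    by_cases h : a ∈ ({0, x} : Finset X)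
    · exact Finset.mem_union_left _ h
    · exact Finset.mem_union_right _ (Finset.mem_biUnion.2 ⟨y, hyS, Finset.mem_sdiff.2 ⟨haA, h⟩⟩)
  refine (Finset.card_le_card hsub).trans ((Finset.card_union_le _ _).trans ?_)
  have := Finset.card_biUnion_le_card_mul S (fun y => A y \ {0, x}) 2 fun y hy => (hA hy).le
  have := Finset.card_le_two (a := (0 : X)) (b := x)
  lia

theorem finrank_right_ne_four_of_finrank_left_eq_four (hT : IsPrimitiveForm T)
    (hX : finrank (ZMod 2) X = 4) : finrank (ZMod 2) Y ≠ 4 := by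
  intro hY
  classical
  have := Module.finite_of_finite (ZMod 2) (M := X)
  have := Fintype.ofFinite X
  have hrefl ⦃a : X⦄ (ha : a ≠ 0) : ¬ Disjoint (orthogonal T a) (orthogonal T a) := by
    rw [disjoint_self, ← Submodule.finrank_eq_zero, hT.finrank_orthogonal_eq_two hX hY ha]
    exact two_ne_zero
  have hadd ⦃a b : X⦄ (hab : ¬ Disjoint (orthogonal T a) (orthogonal T b)) :
      ¬ Disjoint (orthogonal T a) (orthogonal T (a + b)) := by
    refine mt (fun h => ?_) hab
    rw [Submodule.disjoint_def] at h ⊢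
    refine fun y ha hb => h y ha (mem_orthogonal_swapForm.1 (add_mem ?_ ?_))
    exacts [mem_orthogonal_swapForm.2 ha, mem_orthogonal_swapForm.2 hb]
  have hcard ⦃a : X⦄ (ha : a ≠ 0) :
      2 * (Finset.univ.filter fun b => ¬ Disjoint (orthogonal T a) (orthogonal T b)).card ≤
        Fintype.card X := by
    rw [← Nat.card_eq_fintype_card, natCard_eq_pow_finrank (K := ZMod 2), hX, Nat.card_zmod]
    exact Nat.mul_le_mul_left 2 (hT.card_not_disjoint_orthogonal_le hX hY ha)
  obtain ⟨f, hf, hdis⟩ := exists_linearIndependent_pairwise_not_rel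
    (r := fun a b => ¬ Disjoint (orthogonal T a) (orthogonal T b)) (by lia)
    (fun a b => mt fun h => h.symm) hrefl hadd hcard
  exact hT.not_pairwise_disjoint_orthogonal hY hf
    (fun i => hT.left.finrank_ker_flip_eq_two hX (hf.ne_zero i)) fun i j hij => not_not.1 (hdis hij)

theorem finrank_eq_three (hT : IsPrimitiveForm T) :
    finrank (ZMod 2) X = 3 ∧ finrank (ZMod 2) Y = 3 := by
  have hXle := hT.left.finrank_le_four
  have hYle := hT.right.finrank_le_four
  have hX := hT.right.two_lt_finrank
  have hY := hT.left.two_lt_finrank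
  rw [Subspace.dual_finrank_eq] at hX hY
  have h₃₄ := hT.finrank_right_ne_four_of_finrank_left_eq_three
  have h₄₃ := hT.swap.finrank_right_ne_four_of_finrank_left_eq_three
  have h₄₄ := hT.finrank_right_ne_four_of_finrank_left_eq_four
  lia

end ZModTwo

end IsPrimitiveForm

section HollowMatrices

/-- The entries of a `3 × 3` matrix in the positions `(0, 1)`, `(1, 2)` and `(2, 0)`. The other
three positions off the diagonal are those of the same entries of the transposed matrix. For a zero
diagonal, the determinant is the sum of the products of the two triples. -/
def cyclicEntries (K : Type*) [CommRing K] : Matrix (Fin 3) (Fin 3) K →ₗ[K] Fin 3 → K :=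
  LinearMap.pi fun i => Matrix.entryLinearMap K K i (i + 1)

theorem eq_zero_of_cyclicEntries_eq_zero {K : Type*} [CommRing K] {M : Matrix (Fin 3) (Fin 3) K}
    (hdiag : ∀ i, M i i = 0) (h : cyclicEntries K M = 0) (h' : cyclicEntries K Mᵀ = 0) :
    M = 0 := by
  ext i j
  fin_cases i <;> fin_cases j
  exacts [hdiag 0, congrFun h 0, congrFun h' 2, congrFun h' 0, hdiag 1, congrFun h 1,
    congrFun h 2, congrFun h' 1, hdiag 2]

theorem det_eq_prod_cyclicEntries_add {K : Type*} [CommRing K] {M : Matrix (Fin 3) (Fin 3) K}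
    (hdiag : ∀ i, M i i = 0) :
    M.det = ∏ i, cyclicEntries K M i + ∏ i, cyclicEntries K Mᵀ i := by
  simp only [Matrix.det_fin_three, hdiag, Fin.prod_univ_three]
  change _ = M 0 1 * M 1 2 * M 2 0 + M 1 0 * M 2 1 * M 0 2
  ring

theorem mem_V3_iff {M : Matrix (Fin 3) (Fin 3) (ZMod 2)} :
    M ∈ V3 ↔ (∀ i, M i i = 0) ∧ ∑ i, cyclicEntries (ZMod 2) M i = 0 ∧
      ∑ i, cyclicEntries (ZMod 2) Mᵀ i = 0 := by
  rw [Fin.sum_univ_three, Fin.sum_univ_three]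
  change _ ∧ _ ∧ M 2 1 + M 1 0 + M 0 2 = 0 ↔ _ ∧ _ ∧ M 1 0 + M 2 1 + M 0 2 = 0
  rw [add_comm (M 2 1)]
  rfl

theorem finrank_V3_le : finrank (ZMod 2) V3 ≤ 4 := by
  let g : V3 →ₗ[ZMod 2] Fin 4 → ZMod 2 := LinearMap.pi ![Matrix.entryLinearMap _ _ 0 1,
    Matrix.entryLinearMap _ _ 1 2, Matrix.entryLinearMap _ _ 2 1, Matrix.entryLinearMap _ _ 1 0] ∘ₗ
      V3.subtype
  have hg : Function.Injective g := by
    refine (injective_iff_map_eq_zero g).2 fun ⟨M, hdiag, h, h'⟩ hM => Subtype.ext ?_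
    have h₀₁ : M 0 1 = 0 := congrFun hM 0
    have h₁₂ : M 1 2 = 0 := congrFun hM 1
    have h₂₁ : M 2 1 = 0 := congrFun hM 2
    have h₁₀ : M 1 0 = 0 := congrFun hM 3
    rw [h₀₁, h₁₂, zero_add, zero_add] at h
    rw [h₂₁, h₁₀, zero_add, zero_add] at h'
    ext i j
    fin_cases i <;> fin_cases j
    exacts [hdiag 0, h₀₁, h', h₁₀, hdiag 1, h₁₂, h, h₂₁, hdiag 2]
  exact (LinearMap.finrank_le_finrank_of_injective hg).trans_eq (finrank_fin_fun _)

theorem sum_eq_zero_of_one_notMem {R : Submodule (ZMod 2) (Fin 3 → ZMod 2)} (h₁ : 1 ∉ R)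
    (hR : ∀ i, ∃ x ∈ R, x i ≠ 0) {x : Fin 3 → ZMod 2} (hx : x ∈ R) : ∑ i, x i = 0 := by
  obtain ⟨φ, hφ₁, hφ⟩ := Submodule.exists_dual_map_eq_bot_of_notMem h₁ inferInstance
  obtain ⟨c, rfl⟩ := (dotProductEquiv (ZMod 2) (Fin 3)).surjective φ
  have hcR {y : Fin 3 → ZMod 2} (hy : y ∈ R) : c ⬝ᵥ y = 0 :=
    (Submodule.mem_bot (ZMod 2)).1 (hφ ▸ Submodule.mem_map_of_mem hy)
  have hsingle (i : Fin 3) : c ≠ Pi.single i 1 := by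
    rintro rfl
    obtain ⟨y, hy, hyi⟩ := hR i
    exact hyi ((single_one_dotProduct i y).symm.trans (hcR hy))
  have hc₁ : c ⬝ᵥ 1 ≠ 0 := hφ₁
  have hc : c = 1 := by
    clear hφ₁ hφ hcR
    decide +revert
  rw [← one_dotProduct, ← hc, hcR hx]

section Singular

variable {W : Submodule (ZMod 2) (Matrix (Fin 3) (Fin 3) (ZMod 2))}

theorem one_notMem_map_cyclicEntries (hW : 3 < finrank (ZMod 2) W)
    (hdiag : ∀ M ∈ W, ∀ i, M i i = 0) (hdet : ∀ M ∈ W, M.det = 0) :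
    1 ∉ W.map (cyclicEntries (ZMod 2)) := by
  rintro ⟨M, hM, hM₁⟩
  have hT {L : Matrix (Fin 3) (Fin 3) (ZMod 2)} (hL : L ∈ W)
      (hL₁ : cyclicEntries (ZMod 2) L = 1) : cyclicEntries (ZMod 2) Lᵀ = 1 := by
    have hprod := (det_eq_prod_cyclicEntries_add (hdiag L hL)).symm.trans (hdet L hL)
    rw [hL₁] at hprod
    generalize cyclicEntries (ZMod 2) Lᵀ = y at hprod
    decide +revert
  obtain ⟨⟨N, hNW⟩, hN, hN0⟩ := Submodule.exists_mem_ne_zero_of_ne_bot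
    (LinearMap.ker_ne_bot_of_finrank_lt (f := (cyclicEntries (ZMod 2)).domRestrict W)
      (by rwa [finrank_fin_fun]))
  have hN' : cyclicEntries (ZMod 2) N = 0 := hN
  refine hN0 (Subtype.ext (eq_zero_of_cyclicEntries_eq_zero (hdiag N hNW) hN' ?_))
  have hMN := hT (add_mem hM hNW) (by rw [map_add, hM₁, hN', add_zero])
  rwa [Matrix.transpose_add, map_add, hT hM hM₁, add_eq_left] at hMN

theorem sum_cyclicEntries_eq_zero (hW : 3 < finrank (ZMod 2) W)
    (hdiag : ∀ M ∈ W, ∀ i, M i i = 0) (hdet : ∀ M ∈ W, M.det = 0)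
    (hoff : ∀ i j, i ≠ j → ∃ M ∈ W, M i j ≠ 0) {M : Matrix (Fin 3) (Fin 3) (ZMod 2)}
    (hM : M ∈ W) : ∑ i, cyclicEntries (ZMod 2) M i = 0 := by
  refine sum_eq_zero_of_one_notMem (one_notMem_map_cyclicEntries hW hdiag hdet) (fun i => ?_)
    (Submodule.mem_map_of_mem hM)
  obtain ⟨N, hN, hNi⟩ := hoff i (i + 1) (by simp)
  exact ⟨_, Submodule.mem_map_of_mem hN, hNi⟩

theorem eq_V3_of_hollow_of_det_eq_zero (hW : finrank (ZMod 2) W = 4)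
    (hdiag : ∀ M ∈ W, ∀ i, M i i = 0) (hdet : ∀ M ∈ W, M.det = 0)
    (hoff : ∀ i j, i ≠ j → ∃ M ∈ W, M i j ≠ 0) : W = V3 := by
  let e := Matrix.transposeLinearEquiv (Fin 3) (Fin 3) (ZMod 2) (ZMod 2)
  have hWT : 3 < finrank (ZMod 2) (W.map e.toLinearMap) := by
    rw [e.finrank_map_eq, hW]
    norm_num
  refine Submodule.eq_of_le_of_finrank_le (fun M hM => ?_) (hW ▸ finrank_V3_le)
  refine mem_V3_iff.2 ⟨hdiag M hM, sum_cyclicEntries_eq_zero (by lia) hdiag hdet hoff hM, ?_⟩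
  refine sum_cyclicEntries_eq_zero hWT ?_ ?_ (fun i j hij => ?_) (Submodule.mem_map_of_mem hM)
  · rintro _ ⟨N, hN, rfl⟩
    exact hdiag N hN
  · rintro _ ⟨N, hN, rfl⟩
    exact N.det_transpose.trans (hdet N hN)
  · obtain ⟨N, hN, hNij⟩ := hoff j i hij.symm
    exact ⟨_, Submodule.mem_map_of_mem hN, hNij⟩

end Singular

end HollowMatrices

section Matrices

theorem finrank_map_lt_of_mem_ker {K E F : Type*} [DivisionRing K] [AddCommGroup E] [Module K E]
    [AddCommGroup F] [Module K F] {d : E →ₗ[K] F} {S : Submodule K E} [Module.Finite K S] {z : E}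
    (hzS : z ∈ S) (hz : z ≠ 0) (hdz : d z = 0) : finrank K (S.map d) < finrank K S := by
  have hker : 0 < finrank K (d.domRestrict S).ker :=
    finrank_pos_iff_exists_ne_zero.2
      ⟨⟨⟨z, hzS⟩, hdz⟩, fun h => hz (congrArg (fun w => w.1.1) h)⟩
  have := (d.domRestrict S).finrank_range_add_finrank_ker
  rw [LinearMap.range_domRestrict] at this
  lia

variable {K : Type*} [Field K] {n p : ℕ}

theorem exists_isUnit_mulVec_eq {u v : Fin n → K} (hu : u ≠ 0) (hv : v ≠ 0) :
    ∃ P : Matrix (Fin n) (Fin n) K, IsUnit P ∧ P *ᵥ u = v := by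
  let e := (LinearEquiv.toSpanNonzeroSingleton K _ u hu).symm ≪≫ₗ
    LinearEquiv.toSpanNonzeroSingleton K _ v hv
  obtain ⟨g, hg⟩ := Submodule.exists_linearEquiv_restrict_eq e
  refine ⟨LinearMap.toMatrix' g.toLinearMap,
    LinearMap.isUnit_toMatrix'_iff.2 ((Module.End.isUnit_iff _).2 g.bijective), ?_⟩
  rw [LinearMap.toMatrix'_mulVec]
  have heu := hg (LinearEquiv.toSpanNonzeroSingleton K _ u hu 1)
  rw [LinearEquiv.trans_apply, LinearEquiv.symm_apply_apply] at heu
  simpa using heu.symm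

theorem mulVecLin_dropRow (N : Matrix (Fin n) (Fin p) K) :
    (dropRow N).mulVecLin = LinearMap.funLeft K K (Fin.castLE (Nat.sub_le n 1)) ∘ₗ N.mulVecLin :=
  rfl

theorem rank_dropRow_mul_le (P : Matrix (Fin n) (Fin n) K) (M : Matrix (Fin n) (Fin p) K) :
    (dropRow (P * M)).rank ≤ M.rank :=
  (Matrix.rank_submatrix_le _ _ _).trans (Matrix.rank_mul_le_right P M)

theorem exists_isUnit_rank_dropRow_mul_lt {v : Fin n → K} (hv : v ≠ 0) :
    ∃ P : Matrix (Fin n) (Fin n) K, IsUnit P ∧ ∀ M : Matrix (Fin n) (Fin p) K,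
      v ∈ M.mulVecLin.range → (dropRow (P * M)).rank < M.rank := by
  obtain ⟨i, -⟩ := Function.ne_iff.1 hv
  let last : Fin n := ⟨n - 1, Nat.sub_lt i.pos one_pos⟩
  have hlast (j : Fin (n - 1)) : Fin.castLE (Nat.sub_le n 1) j ≠ last :=
    fun h => j.2.ne (congrArg Fin.val h)
  have he : (Pi.single last 1 : Fin n → K) ≠ 0 := Pi.single_ne_zero_iff.2 one_ne_zero
  obtain ⟨P, hP, hPv⟩ := exists_isUnit_mulVec_eq hv he
  refine ⟨P, hP, ?_⟩
  rintro M ⟨x, rfl⟩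
  have hx : (P * M).mulVecLin x = Pi.single last 1 := by
    rw [← hPv, Matrix.mulVecLin_mul]
    rfl
  refine lt_of_lt_of_le ?_ (Matrix.rank_mul_le_right P M)
  rw [Matrix.rank, mulVecLin_dropRow, LinearMap.range_comp]
  exact finrank_map_lt_of_mem_ker ⟨x, hx⟩ he (funext fun j => Pi.single_eq_of_ne (hlast j) _)

theorem dropCol_mul (M : Matrix (Fin n) (Fin p) K) (Q : Matrix (Fin p) (Fin p) K) :
    dropCol (M * Q) = (dropRow (Qᵀ * Mᵀ))ᵀ := by
  rw [← Matrix.transpose_mul]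
  rfl

/-- The map `M ↦ P * M * Q`, by which `MatEquiv` is defined. -/
def mulBoth (P : Matrix (Fin n) (Fin n) K) (Q : Matrix (Fin p) (Fin p) K) :
    Matrix (Fin n) (Fin p) K →ₗ[K] Matrix (Fin n) (Fin p) K :=
  mulRightLinearMap (Fin n) K Q ∘ₗ mulLeftLinearMap (Fin p) K P

theorem mulBoth_apply (P : Matrix (Fin n) (Fin n) K) (Q : Matrix (Fin p) (Fin p) K)
    (M : Matrix (Fin n) (Fin p) K) : mulBoth P Q M = P * M * Q :=
  rfl

variable {V : Submodule K (Matrix (Fin n) (Fin p) K)}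

theorem matEquiv_map_mulBoth {P : Matrix (Fin n) (Fin n) K} {Q : Matrix (Fin p) (Fin p) K}
    (hP : IsUnit P) (hQ : IsUnit Q) : MatEquiv K V (V.map (mulBoth P Q)) :=
  ⟨P, Q, hP, hQ, rfl⟩

theorem rank_le_urk {M : Matrix (Fin n) (Fin p) K} (hM : M ∈ V) : M.rank ≤ urk V := by
  refine le_csSup ⟨n, ?_⟩ (Set.mem_image_of_mem _ hM)
  rintro _ ⟨N, -, rfl⟩
  exact N.rank_le_height

theorem urk_eq_of_forall_rank_eq {r : ℕ} (hV : V ≠ ⊥) (hr : ∀ M ∈ V, M ≠ 0 → M.rank = r) :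
    urk V = r := by
  obtain ⟨M, hM, hM0⟩ := Submodule.exists_mem_ne_zero_of_ne_bot hV
  refine IsGreatest.csSup_eq ⟨⟨M, hM, hr M hM hM0⟩, ?_⟩
  rintro _ ⟨N, hN, rfl⟩
  rcases eq_or_ne N 0 with rfl | hN0
  · exact Matrix.rank_zero.trans_le r.zero_le
  · exact (hr N hN hN0).le

theorem Primitive.exists_rank_eq_urk_notMem_range (hV : Primitive K V) {v : Fin n → K}
    (hv : v ≠ 0) : ∃ M ∈ V, M.rank = urk V ∧ v ∉ M.mulVecLin.range := by
  obtain ⟨P, hP, hlt⟩ := exists_isUnit_rank_dropRow_mul_lt (p := p) hv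
  by_contra! hcon
  refine hV.2 ⟨V.map (mulBoth P 1), matEquiv_map_mulBoth hP isUnit_one, ?_⟩
  rintro _ ⟨M, hM, rfl⟩
  rw [mulBoth_apply, Matrix.mul_one]
  by_cases h : M.rank = urk V
  · exact Nat.le_sub_one_of_lt (h ▸ hlt M (hcon M hM h))
  · exact (rank_dropRow_mul_le P M).trans (Nat.le_sub_one_of_lt ((rank_le_urk hM).lt_of_ne h))

theorem SemiPrimitive.exists_rank_eq_urk_notMem_range_transpose (hV : SemiPrimitive K V)
    {v : Fin p → K} (hv : v ≠ 0) : ∃ M ∈ V, M.rank = urk V ∧ v ∉ Mᵀ.mulVecLin.range := by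
  obtain ⟨Q, hQ, hlt⟩ := exists_isUnit_rank_dropRow_mul_lt (p := n) hv
  by_contra! hcon
  refine hV.2 ⟨V.map (mulBoth 1 Qᵀ),
    matEquiv_map_mulBoth isUnit_one ((Matrix.isUnit_transpose Q).2 hQ), ?_⟩
  rintro _ ⟨M, hM, rfl⟩
  rw [mulBoth_apply, Matrix.one_mul, dropCol_mul, Matrix.transpose_transpose, Matrix.rank_transpose]
  have hle := (rank_dropRow_mul_le Q Mᵀ).trans_eq M.rank_transpose
  by_cases h : M.rank = urk V
  · exact Nat.le_sub_one_of_lt (h ▸ (hlt Mᵀ (hcon M hM h)).trans_eq M.rank_transpose)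
  · exact hle.trans (Nat.le_sub_one_of_lt ((rank_le_urk hM).lt_of_ne h))

theorem Reduced.exists_mulVec_ne_zero (hV : Reduced K V) {x : Fin p → K} (hx : x ≠ 0) :
    ∃ M ∈ V, M *ᵥ x ≠ 0 := by
  by_contra! h
  exact hx (hV.1 x h)

theorem Reduced.exists_transpose_mulVec_ne_zero (hV : Reduced K V) {f : Fin n → K} (hf : f ≠ 0) :
    ∃ M ∈ V, Mᵀ *ᵥ f ≠ 0 := by
  by_contra! h
  have hle : Submodule.span K {y : Fin n → K | ∃ M ∈ V, ∃ x : Fin p → K, M *ᵥ x = y} ≤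
      (dotProductEquiv K (Fin n) f).ker := by
    rw [Submodule.span_le]
    rintro _ ⟨M, hM, x, rfl⟩
    change f ⬝ᵥ M *ᵥ x = 0
    rw [Matrix.dotProduct_mulVec, ← Matrix.mulVec_transpose, h M hM, zero_dotProduct]
  rw [hV.2, top_le_iff, LinearMap.ker_eq_top] at hle
  exact hf ((dotProductEquiv K (Fin n)).map_eq_zero_iff.1 hle)

/-- The trilinear form `(M, f, x) ↦ f ⬝ᵥ M *ᵥ x` of a space of matrices, in which row and column
vectors play the same role. -/
def matrixForm (V : Submodule K (Matrix (Fin n) (Fin p) K)) :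
    V →ₗ[K] (Fin n → K) →ₗ[K] (Fin p → K) →ₗ[K] K :=
  (Matrix.toLinearMap₂' K).toLinearMap ∘ₗ V.subtype

theorem matrixForm_apply (M : V) (f : Fin n → K) (x : Fin p → K) :
    matrixForm V M f x = f ⬝ᵥ M.1 *ᵥ x :=
  Matrix.toLinearMap₂'_apply' M.1 f x

theorem matrixForm_eq_compr₂ : matrixForm V = (Matrix.toLin'.toLinearMap ∘ₗ
    (Matrix.transposeLinearEquiv (Fin n) (Fin p) K K).toLinearMap ∘ₗ V.subtype).compr₂
      (dotProductEquiv K (Fin p)).toLinearMap := by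
  refine LinearMap.ext fun M => LinearMap.ext fun f => LinearMap.ext fun x => ?_
  rw [matrixForm_apply, Matrix.dotProduct_mulVec, ← Matrix.mulVec_transpose]
  rfl

theorem swapForm_matrixForm_eq_compr₂ : swapForm (matrixForm V) =
    (Matrix.toLin'.toLinearMap ∘ₗ V.subtype).compr₂ (dotProductEquiv K (Fin n)).toLinearMap :=
  LinearMap.ext fun M => LinearMap.ext fun x => LinearMap.ext fun f =>
    (matrixForm_apply M f x).trans (dotProduct_comm _ _)

theorem Primitive.isPrimitiveForm_matrixForm (hV : Primitive K V) (hdim : finrank K V = 4)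
    (hrank : ∀ M ∈ V, M ≠ 0 → M.rank = 2) : IsPrimitiveForm (matrixForm V) := by
  have hurk : urk V = 2 := by
    refine urk_eq_of_forall_rank_eq (fun hbot => ?_) hrank
    rw [hbot, finrank_bot] at hdim
    exact absurd hdim (by norm_num)
  have hne {M : Matrix (Fin n) (Fin p) K} (h : M.rank = urk V) : M ≠ 0 := by
    rintro rfl
    exact absurd (h.trans hurk) (by rw [Matrix.rank_zero]; norm_num)
  constructor
  · rw [matrixForm_eq_compr₂]
    refine IsPrimitiveFamily.compr₂ ⟨hdim, fun M hM => ?_, fun f hf => ?_, fun z hz => ?_⟩ _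
    · exact M.1.rank_transpose.trans (hrank M.1 M.2 (Submodule.coe_eq_zero.not.2 hM))
    · obtain ⟨M, hM, hMf⟩ := hV.1.1.exists_transpose_mulVec_ne_zero hf
      exact ⟨⟨M, hM⟩, hMf⟩
    · obtain ⟨M, hM, hMr, hMz⟩ := hV.1.exists_rank_eq_urk_notMem_range_transpose hz
      exact ⟨⟨M, hM⟩, Submodule.coe_eq_zero.not.1 (hne hMr), hMz⟩
  · rw [swapForm_matrixForm_eq_compr₂]
    refine IsPrimitiveFamily.compr₂ ⟨hdim, fun M hM => ?_, fun x hx => ?_, fun z hz => ?_⟩ _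
    · exact hrank M.1 M.2 (Submodule.coe_eq_zero.not.2 hM)
    · obtain ⟨M, hM, hMx⟩ := hV.1.1.exists_mulVec_ne_zero hx
      exact ⟨⟨M, hM⟩, hMx⟩
    · obtain ⟨M, hM, hMr, hMz⟩ := hV.exists_rank_eq_urk_notMem_range hz
      exact ⟨⟨M, hM⟩, Submodule.coe_eq_zero.not.1 (hne hMr), hMz⟩

theorem mulBoth_apply_eq_matrixForm (M : V) (b : Fin n → Fin n → K) (y : Fin p → Fin p → K)
    (i : Fin n) (j : Fin p) :
    mulBoth (Matrix.of b) (Matrix.of y)ᵀ M.1 i j = matrixForm V M (b i) (y j) := by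
  rw [matrixForm_apply, Matrix.dotProduct_mulVec, mulBoth_apply]
  rfl

end Matrices

theorem matEquiv_V3_of_matrixForm_apply_eq_zero
    {V : Submodule (ZMod 2) (Matrix (Fin 3) (Fin 3) (ZMod 2))} (hdim : finrank (ZMod 2) V = 4)
    (hdet : ∀ M ∈ V, M.det = 0) {b y : Fin 3 → Fin 3 → ZMod 2} (hb : LinearIndependent (ZMod 2) b)
    (hy : LinearIndependent (ZMod 2) y) (hdiag : ∀ M i, matrixForm V M (b i) (y i) = 0)
    (hoff : ∀ i j, i ≠ j → ∃ M, matrixForm V M (b i) (y j) ≠ 0) : MatEquiv (ZMod 2) V V3 := by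
  have hP : IsUnit (Matrix.of b) := Matrix.linearIndependent_rows_iff_isUnit.1 hb
  have hQ : IsUnit (Matrix.of y)ᵀ :=
    (Matrix.isUnit_transpose _).2 (Matrix.linearIndependent_rows_iff_isUnit.1 hy)
  have hinj : Function.Injective (mulBoth (Matrix.of b) (Matrix.of y)ᵀ) := fun M N hMN =>
    hP.mul_left_cancel (hQ.mul_right_cancel hMN)
  have hV3 : V.map (mulBoth (Matrix.of b) (Matrix.of y)ᵀ) = V3 := by
    refine eq_V3_of_hollow_of_det_eq_zero ?_ ?_ ?_ fun i j hij => ?_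
    · exact (Submodule.equivMapOfInjective _ hinj V).finrank_eq.symm.trans hdim
    · rintro _ ⟨M, hM, rfl⟩ i
      exact (mulBoth_apply_eq_matrixForm ⟨M, hM⟩ b y i i).trans (hdiag _ i)
    · rintro _ ⟨M, hM, rfl⟩
      rw [mulBoth_apply, Matrix.det_mul, Matrix.det_mul, hdet M hM, mul_zero, zero_mul]
    · obtain ⟨M, hM⟩ := hoff i j hij
      exact ⟨_, ⟨M.1, M.2, rfl⟩, by rwa [mulBoth_apply_eq_matrixForm]⟩
  exact hV3 ▸ matEquiv_map_mulBoth hP hQ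

theorem reindexSub_rfl (V : Submodule (ZMod 2) (Matrix (Fin 3) (Fin 3) (ZMod 2))) :
    reindexSub rfl rfl V = V :=
  Submodule.map_id V

theorem primitive_four_dimensional_rank_two_space_equiv_V3 {n p : ℕ}
    (V : Submodule (ZMod 2) (Matrix (Fin n) (Fin p) (ZMod 2)))
    (hprim : Primitive (ZMod 2) V)
    (hdim : Module.finrank (ZMod 2) V = 4)
    (hrank : ∀ M ∈ V, M ≠ 0 → M.rank = 2) :
    ∃ (hn : n = 3) (hp : p = 3), MatEquiv (ZMod 2) (reindexSub hn hp V) V3 := by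
  have hform := hprim.isPrimitiveForm_matrixForm hdim hrank
  obtain ⟨hX, hY⟩ := hform.finrank_eq_three
  obtain ⟨b, y, hb, hy, hdiag, hoff⟩ := hform.exists_linearIndependent_hollow hX hY
  obtain rfl : n = 3 := (finrank_fin_fun (ZMod 2)).symm.trans hX
  obtain rfl : p = 3 := (finrank_fin_fun (ZMod 2)).symm.trans hY
  have hdet (M : Matrix (Fin 3) (Fin 3) (ZMod 2)) (hM : M ∈ V) : M.det = 0 := by
    by_contra hne
    have hM0 : M ≠ 0 := fun h => hne (h ▸ Matrix.det_zero)
    have := (Matrix.rank_of_det_ne_zero hne).symm.trans (hrank M hM hM0)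
    rw [Fintype.card_fin] at this
    lia
  refine ⟨rfl, rfl, ?_⟩
  rw [reindexSub_rfl]
  exact matEquiv_V3_of_matrixForm_apply_eq_zero hdim hdet hb hy hdiag hoff
end

section
/- Let n be an odd positive integer and F be any field. Then the space of n×n alternating matrices over F is a maximal element among the linear subspaces of n×n matrices over F consisting only of singular matrices; that is, every matrix of Mata_n(F) is singular, and any linear subspace of n×n matrices over F consisting only of singular matrices and containing Mata_n(F) equals Mata_n(F). -/
/-!
Two matrices differ by an alternating one exactly when they define the same quadratic form
`x ↦ xᵀ N x`. Maximality therefore says that every nonzero quadratic form `Q` on a space `V` of odd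
dimension is the form `x ↦ B x x` of some nondegenerate bilinear form `B`.

* If the vectors with `Q x ≠ 0` span `V`, take a basis of such vectors: the bilinear form that is
  upper triangular in this basis and represents `Q` has nonzero diagonal.
* Otherwise `Q` vanishes off a hyperplane `ker f`. Fix `y` with `f y ≠ 0`. For `x ∈ ker f` we have
  `0 = Q (x + y) = Q x + polar Q x y`, so `Q` also vanishes on the kernel of `k = polar Q y`. Hence
  `Q = k * l` for a linear form `l`, and `ker k` has even dimension, so it carries a symplectic
  form. Extended by zero along some `e` with `Q e ≠ 0` and added to `k ⊗ l`, it gives `B`.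
-/

open Matrix

/-- `Mata_n(F)`: the space of `n × n` alternating matrices (skew-symmetric matrices with
zero diagonal) over `F`. -/
def MataN (F : Type*) [Field F] (n : ℕ) : Submodule F (Matrix (Fin n) (Fin n) F) where
  carrier := {M | Mᵀ = -M ∧ ∀ i : Fin n, M i i = 0}
  add_mem' := by
    rintro M N ⟨hM1, hM2⟩ ⟨hN1, hN2⟩
    refine ⟨by rw [Matrix.transpose_add, hM1, hN1]; abel, fun i => by
      simp [Matrix.add_apply, hM2 i, hN2 i]⟩
  zero_mem' := ⟨by simp, fun i => rfl⟩
  smul_mem' := by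
    rintro c M ⟨hM1, hM2⟩
    exact ⟨by rw [Matrix.transpose_smul, hM1, smul_neg], fun i => by
      simp [Matrix.smul_apply, hM2 i]⟩

open Module QuadraticMap LinearMap.BilinMap
open LinearMap (BilinForm)

theorem det_eq_zero_of_transpose_eq_neg_of_diag_eq_zero {ι R : Type*} [Fintype ι] [DecidableEq ι]
    [CommRing R] {M : Matrix ι ι R} (hM : Mᵀ = -M) (hdiag : ∀ i, M i i = 0)
    (hι : Odd (Fintype.card ι)) : M.det = 0 := by
  have hswap (i j : ι) : M j i = -M i j := congrFun (congrFun hM i) j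
  rw [det_apply]
  -- The terms of `σ` and `σ⁻¹` cancel; an involution has a fixed point, which kills its term.
  refine Finset.sum_ninvolution (·⁻¹) (fun σ => ?_) (fun {σ} hσ hinv => hσ ?_)
    (fun _ => Finset.mem_univ _) inv_inv
  · have hprod : ∏ i, M (σ⁻¹ i) i = -∏ i, M (σ i) i := calc
      ∏ i, M (σ⁻¹ i) i = ∏ i, M i (σ i) := by
        rw [← Equiv.prod_comp σ]
        simp only [Equiv.Perm.coe_inv, Equiv.symm_apply_apply]
      _ = -∏ i, M (σ i) i := by
        simp only [hswap (σ _), Finset.prod_neg, Finset.card_univ, hι.neg_one_pow, neg_one_mul]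
    rw [Equiv.Perm.sign_inv, hprod, smul_neg, add_neg_cancel]
  · have hσ_sq : σ ^ 2 ^ 1 = 1 := by
      rw [pow_one, pow_two]
      exact inv_eq_iff_mul_eq_one.mp hinv
    obtain ⟨i, hi⟩ := Equiv.Perm.exists_fixed_point_of_prime hι.not_two_dvd_nat hσ_sq
    rw [Finset.prod_eq_zero (Finset.mem_univ i) (by rw [hi, hdiag]), smul_zero]

theorem exists_isAlt_nondegenerate_of_even_finrank {F V : Type*} [Field F] [AddCommGroup V]
    [Module F V] [FiniteDimensional F V] (hV : Even (finrank F V)) :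
    ∃ ω : BilinForm F V, ω.IsAlt ∧ ω.Nondegenerate := by
  obtain ⟨m, hm⟩ := hV
  let e : (Fin m ⊕ Fin m → F) ≃ₗ[F] V := LinearEquiv.ofFinrankEq _ _ (by simp [hm])
  refine ⟨BilinForm.congr e (J (Fin m) F).toBilin', fun x => ?_, ?_⟩
  · simp [J, toBilin'_apply', fromBlocks_mulVec, neg_mulVec, dotProduct, mul_comm]
  · rw [BilinForm.nondegenerate_congr_iff, BilinForm.nondegenerate_toBilin'_iff_det_ne_zero]
    exact (isUnit_det_J (Fin m) F).ne_zero

theorem nondegenerate_toBilin_of_forall_ne_zero {ι R M : Type*} [Finite ι] [LinearOrder ι]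
    [CommRing R] [IsDomain R] [AddCommGroup M] [Module R M] {Q : QuadraticForm R M}
    (b : Basis ι R M) (hb : ∀ i, Q (b i) ≠ 0) : (Q.toBilin b).Nondegenerate := by
  have := Fintype.ofFinite ι
  refine BilinForm.nondegenerate_of_det_ne_zero (B₃ := Q.toBilin b) b ?_
  rw [det_of_isUpperTriangular]
  · simpa [QuadraticMap.toBilin_apply, Finset.prod_eq_zero_iff] using hb
  · intro i j hij
    have hji : j < i := hij
    simp [QuadraticMap.toBilin_apply, hji.ne', hji.not_gt]

theorem eq_linMulLin_of_forall_eq_zero {R M : Type*} [CommRing R] [AddCommGroup M] [Module R M]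
    {Q : QuadraticForm R M} {k : Dual R M} (hQ : ∀ x, k x = 0 → Q x = 0) {e : M} (he : k e = 1) :
    Q = linMulLin k (Q.polarBilin e - Q e • k) := by
  ext x
  have h := hQ (x - k x • e) (by simp [he])
  rw [sub_eq_add_neg, ← neg_smul, QuadraticMap.map_add Q, QuadraticMap.map_smul,
    polar_smul_right, polar_comm] at h
  simp only [linMulLin_apply, LinearMap.sub_apply, LinearMap.smul_apply, polarBilin_apply_apply,
    smul_eq_mul] at h ⊢
  linear_combination h

section QuadraticForm

variable {F V : Type*} [Field F] [AddCommGroup V] [Module F V]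

theorem exists_dual_forall_eq_zero_of_span_ne_top {Q : QuadraticForm F V}
    (hspan : Submodule.span F {x | Q x ≠ 0} ≠ ⊤) :
    ∃ k : Dual F V, ∀ x, k x = 0 → Q x = 0 := by
  obtain ⟨f, hf, hle⟩ := Submodule.exists_le_ker_of_lt_top _ hspan.lt_top
  have hQf (x : V) : f x ≠ 0 → Q x = 0 := fun hx =>
    not_not.mp fun hQx => hx (hle (Submodule.subset_span hQx))
  obtain ⟨y, hy⟩ := DFunLike.ne_iff.mp hf
  refine ⟨Q.polarBilin y, fun x hx => ?_⟩
  by_cases hfx : f x = 0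
  · have h := hQf (y + x) (by simpa [hfx] using hy)
    rw [polarBilin_apply_apply] at hx
    rwa [QuadraticMap.map_add Q, hQf y hy, hx, zero_add, add_zero] at h
  · exact hQf x hfx

variable [FiniteDimensional F V]

theorem exists_nondegenerate_toQuadraticMap_eq_of_span_eq_top {Q : QuadraticForm F V}
    (hspan : Submodule.span F {x | Q x ≠ 0} = ⊤) :
    ∃ B : BilinForm F V, B.Nondegenerate ∧ toQuadraticMap B = Q := by
  let b := Basis.ofSpan hspan.ge
  have hb (i) : Q (b i) ≠ 0 := Basis.ofSpan_subset hspan.ge ⟨i, rfl⟩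
  have := FiniteDimensional.fintypeBasisIndex b
  let c := b.reindex (Fintype.equivFinOfCardEq (finrank_eq_card_basis b).symm)
  have hc (i) : Q (c i) ≠ 0 := by
    rw [b.reindex_apply]
    exact hb _
  exact ⟨Q.toBilin c, nondegenerate_toBilin_of_forall_ne_zero c hc, toQuadraticMap_toBilin Q c⟩

theorem exists_nondegenerate_toQuadraticMap_eq_linMulLin {k l : Dual F V}
    (hk : Even (finrank F (LinearMap.ker k))) {e : V} (hke : k e = 1) (hle : l e ≠ 0) :
    ∃ B : BilinForm F V, B.Nondegenerate ∧ toQuadraticMap B = linMulLin k l := by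
  obtain ⟨ω, hω_alt, hω_nondeg⟩ := exists_isAlt_nondegenerate_of_even_finrank hk
  let π : V →ₗ[F] LinearMap.ker k :=
    (LinearMap.id - k.smulRight e).codRestrict _ fun x => by simp [hke]
  have hπ (x : V) : (π x : V) = x - k x • e := rfl
  have hπ_ker (x : LinearMap.ker k) : π x = x := Subtype.ext (by simp [hπ])
  have hπe : π e = 0 := Subtype.ext (by simp [hπ, hke])
  refine ⟨BilinForm.linMulLin k l + ω.comp π π, .ofSeparatingLeft fun x hx => ?_, ?_⟩
  · have hkx : k x = 0 := by simpa [hπe, hle] using hx e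
    have hπx : π x = 0 := hω_nondeg.1 _ fun z => by simpa [hkx, hπ_ker] using hx z
    simpa [hkx, hπx, eq_comm] using hπ x
  · ext x
    simp [hω_alt (π x)]

theorem exists_nondegenerate_toQuadraticMap_eq_of_forall_eq_zero (hV : Odd (finrank F V))
    {Q : QuadraticForm F V} (hQ : Q ≠ 0) {k : Dual F V} (hk : ∀ x, k x = 0 → Q x = 0) :
    ∃ B : BilinForm F V, B.Nondegenerate ∧ toQuadraticMap B = Q := by
  obtain ⟨z, hz⟩ := DFunLike.ne_iff.mp hQ
  have hkz : k z ≠ 0 := mt (hk z) hz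
  have hker : Even (finrank F (LinearMap.ker k)) := by
    have hdim := Dual.finrank_ker_add_one_of_ne_zero (f := k) fun h => hkz (by simp [h])
    rwa [← hdim, Nat.odd_add_one, Nat.not_odd_iff_even] at hV
  let e := (k z)⁻¹ • z
  have hke : k e = 1 := by simp [e, hkz]
  have hQe : Q e ≠ 0 := by simpa [e, QuadraticMap.map_smul, hkz] using hz
  rw [eq_linMulLin_of_forall_eq_zero hk hke]
  refine exists_nondegenerate_toQuadraticMap_eq_linMulLin hker hke ?_
  simpa [hke, two_mul] using hQe

theorem exists_nondegenerate_toQuadraticMap_eq (hV : Odd (finrank F V)) {Q : QuadraticForm F V}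
    (hQ : Q ≠ 0) : ∃ B : BilinForm F V, B.Nondegenerate ∧ toQuadraticMap B = Q := by
  by_cases hspan : Submodule.span F {x | Q x ≠ 0} = ⊤
  · exact exists_nondegenerate_toQuadraticMap_eq_of_span_eq_top hspan
  · obtain ⟨k, hk⟩ := exists_dual_forall_eq_zero_of_span_ne_top hspan
    exact exists_nondegenerate_toQuadraticMap_eq_of_forall_eq_zero hV hQ hk

end QuadraticForm

section MataN

variable {F : Type*} [Field F] {n : ℕ}

theorem mem_MataN_iff_toQuadraticMap_eq_zero {M : Matrix (Fin n) (Fin n) F} :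
    M ∈ MataN F n ↔ toQuadraticMap M.toBilin' = 0 := by
  constructor
  · rintro ⟨hM, hdiag⟩
    have hswap (i j : Fin n) : M j i = -M i j := congrFun (congrFun hM i) j
    have hzero : (toQuadraticMap M.toBilin').toBilin (Pi.basisFun F (Fin n)) = 0 := by
      refine (Pi.basisFun F (Fin n)).ext fun i => (Pi.basisFun F (Fin n)).ext fun j => ?_
      rw [QuadraticMap.toBilin_apply]
      simp [hdiag, hswap j i, polar_toQuadraticMap]
    rw [← toQuadraticMap_toBilin (toQuadraticMap _) (Pi.basisFun F (Fin n)), hzero,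
      toQuadraticMap_zero]
  · rw [toQuadraticMap_eq_zero]
    intro hM
    refine ⟨?_, fun i => ?_⟩
    · ext i j
      simpa using (hM.neg (Pi.single i 1) (Pi.single j 1)).symm
    · simpa using hM (Pi.single i 1)

theorem exists_mem_MataN_det_add_ne_zero (hn : Odd n) {N : Matrix (Fin n) (Fin n) F}
    (hN : N ∉ MataN F n) : ∃ A ∈ MataN F n, (N + A).det ≠ 0 := by
  have hQ : toQuadraticMap N.toBilin' ≠ 0 :=
    mt mem_MataN_iff_toQuadraticMap_eq_zero.mpr hN
  obtain ⟨B, hB, hBN⟩ := exists_nondegenerate_toQuadraticMap_eq (by simpa using hn) hQ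
  refine ⟨BilinForm.toMatrix' B - N, ?_, ?_⟩
  · rw [mem_MataN_iff_toQuadraticMap_eq_zero, map_sub, toBilin'_toMatrix', toQuadraticMap_sub,
      hBN, sub_self]
  · rwa [add_sub_cancel, ← BilinForm.nondegenerate_toBilin'_iff_det_ne_zero, toBilin'_toMatrix']

theorem mataN_maximal_singular_subspace_general (hn : Odd n) :
    (∀ M ∈ MataN F n, M.det = 0) ∧
    ∀ W : AddSubmonoid (Matrix (Fin n) (Fin n) F),
      (∀ M ∈ W, M.det = 0) → (MataN F n).toAddSubmonoid ≤ W →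
        W = (MataN F n).toAddSubmonoid := by
  refine ⟨fun M hM => det_eq_zero_of_transpose_eq_neg_of_diag_eq_zero hM.1 hM.2 (by simpa using hn),
    fun W hW hle => le_antisymm (fun N hN => ?_) hle⟩
  by_contra hN_alt
  obtain ⟨A, hA, hdet⟩ := exists_mem_MataN_det_add_ne_zero hn hN_alt
  exact hdet (hW _ (W.add_mem hN (hle hA)))

end MataN

theorem mataN_maximal_singular_subspace {F : Type*} [Field F] {n : ℕ} (hn : Odd n) :
    (∀ M ∈ MataN F n, M.det = 0) ∧
    ∀ W : Submodule F (Matrix (Fin n) (Fin n) F),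
      (∀ M ∈ W, M.det = 0) → MataN F n ≤ W → W = MataN F n :=
  have ⟨hsing, hmax⟩ := mataN_maximal_singular_subspace_general hn
  ⟨hsing, fun W hW hle => Submodule.toAddSubmonoid_injective (hmax W.toAddSubmonoid hW hle)⟩
end
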